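/- Fix a sign ε ∈ {+1, −1}. Suppose a sequence of integers {y_n} satisfies y_n = ε n|a| + d_n with d_n = O(n^{1/3}). Then p_n(φ; y_n) = (1 + (−1)^{n+y_n}) α₀² n^{−2/3} |Ai(ε α₀ n^{−1/3} d_n)|² (1 + ε|a| λ_A(φ)) + O(1/n) as n → ∞, where α₀ = (2/(|a||b|²))^{1/3}. -/

import Mathlib

/-!
Write `A = |a|`. By Fourier inversion, with `z = ζ e^{is}` and `ζ = i ā / |a|`, the amplitude at `x`
is `ζ^x (2π)⁻¹ ∫ e^{ixs} M(s)ⁿ φ ds` over one period. The symbol `M(s)` has the eigenvalues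
`-i e^{-iν(s)}` and `i e^{iν(s)}`, where `sin ν = A sin s`, and `s ↦ s + π` exchanges the two
spectral branches. Hence both contribute the same integral up to the sign `(-1)^{n+x}`, which leaves
`1 + (-1)^{n+x}` times the single oscillatory integral `∫ e^{ixs} e^{-inν(s)} p(s) ds`, with `p` the
spectral projection of `φ`.

At the right wall `x = nA + d` the phase is `n (As - ν(s)) + ds`, and
`As - ν(s) = A (1 - A²) s³ / 6 + O(s⁴)`. With `n κ³ = 2 / (A (1 - A²))`, that is
`κ = α₀ n^{-1/3}`, the contour is moved to `Im s = κ`, the sides of the rectangle cancelling by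
periodicity. On that line the integrand has Gaussian decay in `Re s / κ` and differs from `p(0)`
times the Airy integrand on `Im z = 1` by `O(κ)` times an integrable function. The Airy integral may
itself be moved to that line, so the oscillatory integral is `2π κ Ai(κd) p(0) + O(κ²)`. Squaring
gives an error `O(κ³) = O(1/n)`, and `‖p(0)‖² = (‖φ‖² + A λ_A(φ)) / 2`.

The left wall follows by the reflection `x ↦ -x`, which maps the walk of `(a, b)` to that of
`(ā, -b̄)` and changes the sign of `λ_A`.
-/

open Filter Topology Asymptotics MeasureTheory

noncomputable section

/-- One step of the (column-decomposition) quantum walk `U` on functions `ℤ → ℂ²`: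
`(Uf)(x) = P f(x+1) + Q f(x-1)` with `P = [[a,0],[-conj b,0]]`, `Q = [[0,b],[0,conj a]]`. -/
def qwStep (a b : ℂ) (f : ℤ → ℂ × ℂ) : ℤ → ℂ × ℂ := fun x =>
  (a * (f (x + 1)).1 + b * (f (x - 1)).2,
   -(starRingEnd ℂ) b * (f (x + 1)).1 + (starRingEnd ℂ) a * (f (x - 1)).2)

/-- `δ₀ ⊗ φ : ℤ → ℂ²`. -/
def qwDelta (φ : ℂ × ℂ) : ℤ → ℂ × ℂ := fun x => if x = 0 then φ else 0

/-- Squared norm of a vector in `ℂ²`. -/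
def nsq (u : ℂ × ℂ) : ℝ := ‖u.1‖ ^ 2 + ‖u.2‖ ^ 2

/-- Transition probability `p_n(φ; y) = ‖(Uⁿ(δ₀ ⊗ φ))(y)‖²`. -/
def qwP (a b : ℂ) (φ : ℂ × ℂ) (n : ℕ) (y : ℤ) : ℝ :=
  nsq (((qwStep a b)^[n] (qwDelta φ)) y)

/-- `λ_A(φ) = |φ₂|² − |φ₁|² + (1/|a|²)(ab conj(φ₁)φ₂ + conj(ab) φ₁ conj(φ₂))` (a real number). -/
def lamA (a b : ℂ) (φ : ℂ × ℂ) : ℝ :=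
  ‖φ.2‖ ^ 2 - ‖φ.1‖ ^ 2 +
    (a * b * (starRingEnd ℂ) φ.1 * φ.2 +
      (starRingEnd ℂ) a * (starRingEnd ℂ) b * φ.1 * (starRingEnd ℂ) φ.2).re / ‖a‖ ^ 2

/-- `μ(t) = arccos(|a| cos t)`. -/
def muF (a : ℂ) (t : ℝ) : ℝ := Real.arccos (‖a‖ * Real.cos t)

/-- `t(η) = arcsin(|b|η/(|a|√(1 − η²)))`. -/
def tF (a b : ℂ) (η : ℝ) : ℝ := Real.arcsin (‖b‖ * η / (‖a‖ * Real.sqrt (1 - η ^ 2)))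

/-- `θ(η) = 2μ(t(η)) − 2η t(η)`. -/
def thetaF (a b : ℂ) (η : ℝ) : ℝ := 2 * muF a (tF a b η) - 2 * η * tF a b η

/-- The Airy function `Ai(x) = (1/2π)∫_{−∞}^{∞} e^{i(ξ³/3 + ξx)} dξ`, as an improper
(oscillatory) integral, i.e. the limit of `∫_{−R}^{R}` as `R → ∞`. -/
def Ai (x : ℝ) : ℂ :=
  ((1 / (2 * Real.pi) : ℝ) : ℂ) *
    limUnder Filter.atTop
      (fun R : ℝ => ∫ t in (-R)..R, Complex.exp (Complex.I * ((t : ℂ) ^ 3 / 3 + (t : ℂ) * (x : ℂ))))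

section Estimates

variable {𝕜 E F : Type*} [RCLike 𝕜] [NormedAddCommGroup E] [NormedAddCommGroup F]

theorem norm_pow_sub_pow_le {R : Type*} [NormedCommRing R] [NormOneClass R] {z w : R} {r : ℝ}
    (hz : ‖z‖ ≤ r) (hw : ‖w‖ ≤ r) (n : ℕ) : ‖z ^ n - w ^ n‖ ≤ n * ‖z - w‖ * r ^ (n - 1) := by
  have hr : 0 ≤ r := (norm_nonneg z).trans hz
  have hterm : ∀ i ∈ Finset.range n, ‖z ^ i * w ^ (n - 1 - i)‖ ≤ r ^ (n - 1) := fun i hi => by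
    have hi : i + (n - 1 - i) = n - 1 := by grind
    calc ‖z ^ i * w ^ (n - 1 - i)‖ ≤ ‖z‖ ^ i * ‖w‖ ^ (n - 1 - i) :=
          (norm_mul_le _ _).trans (by gcongr <;> exact norm_pow_le _ _)
      _ ≤ r ^ i * r ^ (n - 1 - i) := by gcongr
      _ = r ^ (n - 1) := by rw [← pow_add, hi]
  calc ‖z ^ n - w ^ n‖
      = ‖(∑ i ∈ Finset.range n, z ^ i * w ^ (n - 1 - i)) * (z - w)‖ := by
        rw [(Commute.all z w).geom_sum₂_mul]
    _ ≤ (n • r ^ (n - 1)) * ‖z - w‖ := (norm_mul_le _ _).trans (by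
        gcongr
        simpa using norm_sum_le_of_le (Finset.range n) hterm)
    _ = n * ‖z - w‖ * r ^ (n - 1) := by rw [nsmul_eq_mul]; ring

theorem exists_norm_le_mul_norm_pow_of_isBigO {K : Set E} (hK : IsCompact K) {f : E → F}
    (hf : ContinuousOn f K) {k : ℕ} (h : f =O[𝓝 0] fun s => ‖s‖ ^ k) :
    ∃ C, 0 ≤ C ∧ ∀ s ∈ K, ‖f s‖ ≤ C * ‖s‖ ^ k := by
  obtain ⟨c, hc, hnear⟩ := h.exists_nonneg
  obtain ⟨r, hr, hnear⟩ := Metric.eventually_nhds_iff.1 hnear.bound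
  obtain ⟨M, hM⟩ := hK.exists_bound_of_continuousOn hf
  refine ⟨max c (|M| / r ^ k), le_max_of_le_left hc, fun s hs => ?_⟩
  rcases lt_or_ge ‖s‖ r with hsr | hsr
  · calc ‖f s‖ ≤ c * ‖s‖ ^ k := by simpa using hnear (y := s) (by simpa using hsr)
      _ ≤ _ := by gcongr; exact le_max_left _ _
  · calc ‖f s‖ ≤ |M| / r ^ k * r ^ k := by
          rw [div_mul_cancel₀ _ (by positivity)]
          exact (hM s hs).trans (le_abs_self M)
      _ ≤ _ := by gcongr; exact le_max_right _ _

theorem exists_norm_sub_le_mul_norm [NormedSpace 𝕜 E] [NormedSpace 𝕜 F] {K : Set E}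
    (hK : IsCompact K) {f : E → F} (hf : ContinuousOn f K) (hf₀ : DifferentiableAt 𝕜 f 0) :
    ∃ C, 0 ≤ C ∧ ∀ s ∈ K, ‖f s - f 0‖ ≤ C * ‖s‖ := by
  simpa only [pow_one] using exists_norm_le_mul_norm_pow_of_isBigO (f := fun s => f s - f 0)
    (k := 1) hK (hf.sub continuousOn_const) (by simpa using hf₀.isBigO_sub.norm_right)

theorem norm_image_sub_image_zero_le [NormedSpace 𝕜 F] {f f' : 𝕜 → F} {K : Set 𝕜}
    (hK : StarConvex ℝ 0 K) {C : ℝ} {k : ℕ} (hC : 0 ≤ C)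
    (hf : ∀ s ∈ K, HasDerivWithinAt f (f' s) K s) (hf' : ∀ s ∈ K, ‖f' s‖ ≤ C * ‖s‖ ^ k) :
    ∀ s ∈ K, ‖f s - f 0‖ ≤ C * ‖s‖ ^ (k + 1) := fun s hs => by
  have hsub : segment ℝ 0 s ⊆ K := hK.segment_subset hs
  have hbound : ∀ t ∈ segment ℝ 0 s, ‖f' t‖ ≤ C * ‖s‖ ^ k := fun t ht => by
    have hts : ‖t‖ ≤ ‖s‖ := by
      simpa using norm_sub_le_of_mem_segment ht
    exact (hf' t (hsub ht)).trans (by gcongr)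
  have h := (convex_segment (0 : 𝕜) s).norm_image_sub_le_of_norm_hasDerivWithin_le
    (fun t ht => (hf t (hsub ht)).mono hsub) hbound
    (left_mem_segment ℝ 0 s) (right_mem_segment ℝ 0 s)
  simpa only [sub_zero, mul_assoc, ← pow_succ] using h

theorem norm_le_norm_mul_exp_of_hasDerivAt {f k : ℝ → ℂ} {m m' : ℝ → ℝ} {T : ℝ} (hT : 0 ≤ T)
    (hf : ∀ t ∈ Set.Icc 0 T, HasDerivAt f (k t * f t) t)
    (hm : ∀ t ∈ Set.Icc 0 T, HasDerivAt m (m' t) t)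
    (hk : ∀ t ∈ Set.Icc 0 T, (k t).re ≤ m' t) :
    ‖f T‖ ≤ ‖f 0‖ * Real.exp (m T - m 0) := by
  have hderiv : ∀ t ∈ Set.Icc 0 T, HasDerivAt (fun t => ‖f t‖ ^ 2 * Real.exp (-(2 * m t)))
      (2 * ((k t).re - m' t) * (‖f t‖ ^ 2 * Real.exp (-(2 * m t)))) t := fun t ht => by
    refine ((hf t ht).norm_sq.mul ((hm t ht).const_mul 2).fun_neg.exp).congr_deriv ?_
    have hinner : inner ℝ (f t) (k t * f t) = (k t).re * ‖f t‖ ^ 2 := by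
      rw [Complex.inner, ← Complex.normSq_eq_norm_sq, mul_assoc, Complex.mul_conj]
      simp
    rw [hinner]
    ring
  have hanti : AntitoneOn (fun t => ‖f t‖ ^ 2 * Real.exp (-(2 * m t))) (Set.Icc 0 T) := by
    refine antitoneOn_of_deriv_nonpos (convex_Icc 0 T)
      (fun t ht => (hderiv t ht).continuousAt.continuousWithinAt)
      (fun t ht => (hderiv t (interior_subset ht)).differentiableAt.differentiableWithinAt)
      fun t ht => ?_
    rw [(hderiv t (interior_subset ht)).deriv]
    have := hk t (interior_subset ht)
    exact mul_nonpos_of_nonpos_of_nonneg (by linarith) (by positivity)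
  have hT0 := hanti (Set.left_mem_Icc.2 hT) (Set.right_mem_Icc.2 hT) hT
  refine le_of_sq_le_sq ?_ (by positivity)
  calc ‖f T‖ ^ 2 = ‖f T‖ ^ 2 * Real.exp (-(2 * m T)) * Real.exp (2 * m T) := by
        rw [mul_assoc, ← Real.exp_add]; simp
    _ ≤ ‖f 0‖ ^ 2 * Real.exp (-(2 * m 0)) * Real.exp (2 * m T) := by gcongr
    _ = (‖f 0‖ * Real.exp (m T - m 0)) ^ 2 := by
        rw [mul_pow, ← Real.exp_nat_mul, mul_assoc, ← Real.exp_add]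
        congr 2
        push_cast
        ring

theorem integrable_sq_one_add_sq_mul_exp {p : ℝ} (hp : 0 < p) :
    Integrable fun ξ : ℝ => (1 + ξ ^ 2) ^ 2 * Real.exp (-p * ξ ^ 2) := by
  have hpow : ∀ k : ℕ, Integrable fun ξ : ℝ => ξ ^ k * Real.exp (-p * ξ ^ 2) := fun k => by
    have hk : (-1 : ℝ) < k := by linarith [k.cast_nonneg (α := ℝ)]
    simpa only [Real.rpow_natCast] using integrable_rpow_mul_exp_neg_mul_sq hp hk
  refine (((hpow 0).add ((hpow 2).const_mul 2)).add (hpow 4)).congr (ae_of_all _ fun ξ => ?_)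
  simp only [Pi.add_apply]
  ring

end Estimates

section Rectangles

/-- The closed rectangle `|Re s| ≤ r`, `|Im s| ≤ δ`, on which the saddle point analysis of an
integral over `[-r, r]` takes place. -/
def symmRect (r δ : ℝ) : Set ℂ := Set.Icc (-r) r ×ℂ Set.Icc (-δ) δ

theorem mem_symmRect {r δ : ℝ} {s : ℂ} : s ∈ symmRect r δ ↔ |s.re| ≤ r ∧ |s.im| ≤ δ := by
  simp only [symmRect, Complex.mem_reProdIm, Set.mem_Icc, abs_le]

theorem isCompact_symmRect (r δ : ℝ) : IsCompact (symmRect r δ) :=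
  isCompact_Icc.reProdIm isCompact_Icc

theorem starConvex_symmRect (r δ : ℝ) : StarConvex ℝ 0 (symmRect r δ) :=
  starConvex_zero_iff.2 fun s hs t ht₀ ht₁ => by
    rw [mem_symmRect] at hs ⊢
    simp only [Complex.real_smul, Complex.re_ofReal_mul, Complex.im_ofReal_mul, abs_mul,
      abs_of_nonneg ht₀]
    exact ⟨(mul_le_of_le_one_left (abs_nonneg _) ht₁).trans hs.1,
      (mul_le_of_le_one_left (abs_nonneg _) ht₁).trans hs.2⟩

theorem add_mul_I_mem_symmRect {r δ x τ : ℝ} :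
    (x + τ * Complex.I : ℂ) ∈ symmRect r δ ↔ |x| ≤ r ∧ |τ| ≤ δ := by
  simp [mem_symmRect]

theorem symmRect_mem_nhds_zero {r δ : ℝ} (hr : 0 < r) (hδ : 0 < δ) : symmRect r δ ∈ 𝓝 (0 : ℂ) :=
  mem_of_superset
    (((isOpen_Ioo (a := -r) (b := r)).reProdIm (isOpen_Ioo (a := -δ) (b := δ))).mem_nhds
      (by simp [Complex.mem_reProdIm, hr, hδ]))
    (Set.inter_subset_inter (Set.preimage_mono Set.Ioo_subset_Icc_self)
      (Set.preimage_mono Set.Ioo_subset_Icc_self))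

theorem hasDerivAt_add_mul_I (x τ : ℝ) :
    HasDerivAt (fun τ : ℝ => (x + τ * Complex.I : ℂ)) Complex.I τ := by
  simpa using ((hasDerivAt_id τ).ofReal_comp.mul_const Complex.I).const_add (x : ℂ)

theorem im_deriv_ofReal_eq_zero {H : ℂ → ℂ} {x : ℝ} (hH : DifferentiableAt ℂ H x)
    (hreal : ∀ᶠ t : ℝ in 𝓝 x, (H t).im = 0) : (deriv H x).im = 0 := by
  have him : HasDerivAt (fun t : ℝ => (H t).im) (deriv H x).im x :=
    Complex.imCLM.hasFDerivAt.comp_hasDerivAt x hH.hasDerivAt.comp_ofReal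
  exact him.unique ((hasDerivAt_const x 0).congr_of_eventuallyEq hreal)

/-- By the Cauchy–Riemann equations the real part has no term linear in `τ`. -/
theorem exists_abs_re_add_mul_I_sub_le {H : ℂ → ℂ} {U : Set ℂ} (hU : IsOpen U)
    (hH : DifferentiableOn ℂ H U) {r δ : ℝ} (hrect : symmRect r δ ⊆ U)
    (hreal : ∀ x : ℝ, (x : ℂ) ∈ U → (H x).im = 0) :
    ∃ C, 0 ≤ C ∧ ∀ x τ : ℝ, |x| ≤ r → τ ∈ Set.Icc 0 δ →
      |(H (x + τ * Complex.I)).re - (H x).re| ≤ C * τ ^ 2 := by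
  have hH' : DifferentiableOn ℂ (deriv H) U := hH.deriv hU
  obtain ⟨C, hC⟩ := (isCompact_symmRect r δ).exists_bound_of_continuousOn
    ((hH'.deriv hU).continuousOn.mono hrect)
  refine ⟨|C|, abs_nonneg C, fun x τ hx hτ => ?_⟩
  have hstar : StarConvex ℝ 0 (Set.Icc 0 δ) :=
    (convex_Icc 0 δ).starConvex (Set.left_mem_Icc.2 (hτ.1.trans hτ.2))
  have hmem : ∀ t ∈ Set.Icc 0 δ, (x + t * Complex.I : ℂ) ∈ symmRect r δ := fun t ht =>
    add_mul_I_mem_symmRect.2 ⟨hx, (abs_of_nonneg ht.1).trans_le ht.2⟩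
  have hderiv : ∀ {G : ℂ → ℂ}, DifferentiableOn ℂ G U → ∀ t ∈ Set.Icc 0 δ,
      HasDerivAt (fun t : ℝ => G (x + t * Complex.I)) (deriv G (x + t * Complex.I) * Complex.I) t :=
    fun hG t ht => (hG.differentiableAt (hU.mem_nhds (hrect (hmem t ht)))).hasDerivAt.comp t
      (hasDerivAt_add_mul_I x t)
  have hxU : (x : ℂ) ∈ U := hrect (by simpa using hmem 0 (Set.left_mem_Icc.2 (hτ.1.trans hτ.2)))
  have hreal₀ : (deriv H x).im = 0 := im_deriv_ofReal_eq_zero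
    (hH.differentiableAt (hU.mem_nhds hxU))
    ((Complex.continuous_ofReal.tendsto x).eventually (hU.mem_nhds hxU) |>.mono hreal)
  have himDeriv : ∀ t ∈ Set.Icc 0 δ, |(deriv H (x + t * Complex.I)).im| ≤ |C| * ‖t‖ ^ 1 :=
    fun t ht => by
      have h := norm_image_sub_image_zero_le (C := |C|) (k := 0) hstar (abs_nonneg C)
        (fun t ht => (hderiv hH' t ht).hasDerivWithinAt)
        (fun t ht => by simpa using (hC _ (hmem t ht)).trans (le_abs_self C)) t ht
      simpa [hreal₀] using (Complex.abs_im_le_norm _).trans h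
  have h := norm_image_sub_image_zero_le (k := 1) hstar (abs_nonneg C)
    (fun t ht => (Complex.reCLM.hasFDerivAt.comp_hasDerivAt t (hderiv hH t ht)).hasDerivWithinAt)
    (fun t ht => by simpa using himDeriv t ht) τ hτ
  simpa using h

theorem intervalIntegral_eq_add_mul_I {E : Type*} [NormedAddCommGroup E] [NormedSpace ℂ E]
    [CompleteSpace E] {F : ℂ → E} {r δ τ : ℝ} (hF : DifferentiableOn ℂ F (symmRect r δ))
    (hr : 0 ≤ r) (hτ : τ ∈ Set.Icc 0 δ)
    (hsides : ∀ y ∈ Set.Icc 0 τ, F (-r + y * Complex.I) = F (r + y * Complex.I)) :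
    ∫ x in -r..r, F x = ∫ x in -r..r, F (x + τ * Complex.I) := by
  have hsub : Set.uIcc (-r) r ×ℂ Set.uIcc 0 τ ⊆ symmRect r δ := by
    rw [Set.uIcc_of_le (by linarith), Set.uIcc_of_le hτ.1]
    exact Complex.reProdIm_subset_iff.2 (Set.prod_mono_right
      (Set.Icc_subset_Icc (by linarith [hτ.1, hτ.2]) hτ.2))
  have hsides : ∫ y in 0..τ, F (-r + y * Complex.I) = ∫ y in 0..τ, F (r + y * Complex.I) :=
    intervalIntegral.integral_congr fun y hy => hsides y (Set.uIcc_of_le hτ.1 ▸ hy)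
  have h := Complex.integral_boundary_rect_eq_zero_of_differentiableOn F (-r : ℝ)
    (r + τ * Complex.I) (hF.mono (by simpa using hsub))
  simpa [hsides, sub_eq_zero] using h

end Rectangles

section Airy

theorem re_I_mul_cube (x τ : ℝ) :
    (Complex.I * (x + τ * Complex.I : ℂ) ^ 3).re = τ ^ 3 - 3 * x ^ 2 * τ := by
  simp only [pow_succ, pow_zero, one_mul, Complex.mul_re, Complex.mul_im, Complex.add_re,
    Complex.add_im, Complex.ofReal_re, Complex.ofReal_im, Complex.I_re, Complex.I_im]
  ring

/-- The Airy integrand `e^{i(z³/3 + xz)}` continued to complex `z`. -/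
def airyIntegrand (x : ℝ) (z : ℂ) : ℂ := Complex.exp (Complex.I * (z ^ 3 / 3 + z * x))

theorem differentiable_airyIntegrand (x : ℝ) : Differentiable ℂ (airyIntegrand x) := by
  unfold airyIntegrand
  fun_prop

theorem norm_airyIntegrand (x t τ : ℝ) :
    ‖airyIntegrand x (t + τ * Complex.I)‖ = Real.exp (τ ^ 3 / 3 - t ^ 2 * τ - τ * x) := by
  have hre : (Complex.I * ((t + τ * Complex.I : ℂ) ^ 3 / 3 + (t + τ * Complex.I) * x)).re =
      τ ^ 3 / 3 - t ^ 2 * τ - τ * x := by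
    have hsplit : Complex.I * ((t + τ * Complex.I : ℂ) ^ 3 / 3 + (t + τ * Complex.I) * x) =
        (1 / 3 : ℝ) * (Complex.I * (t + τ * Complex.I) ^ 3) +
          x * (Complex.I * (t + τ * Complex.I)) := by
      push_cast
      ring
    rw [hsplit, Complex.add_re, Complex.re_ofReal_mul, Complex.re_ofReal_mul, re_I_mul_cube]
    simp only [Complex.I_mul_re, Complex.add_im, Complex.ofReal_im, Complex.im_ofReal_mul,
      Complex.I_im]
    ring
  rw [airyIntegrand, Complex.norm_exp, hre]

theorem norm_airyIntegrand_add_I (x t : ℝ) :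
    ‖airyIntegrand x (t + Complex.I)‖ = Real.exp (1 / 3 - x) * Real.exp (-1 * t ^ 2) := by
  have h := norm_airyIntegrand x t 1
  rw [Complex.ofReal_one, one_mul] at h
  rw [h, ← Real.exp_add]
  congr 1
  ring

theorem integrable_airyIntegrand_add_I (x : ℝ) :
    Integrable fun t : ℝ => airyIntegrand x (t + Complex.I) :=
  ((integrable_exp_neg_mul_sq one_pos).const_mul (Real.exp (1 / 3 - x))).mono'
    ((differentiable_airyIntegrand x).continuous.comp (by fun_prop)).aestronglyMeasurable
    (ae_of_all _ fun t => (norm_airyIntegrand_add_I x t).le)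

theorem tendsto_integral_airyIntegrand_vertical (x : ℝ) {l : Filter ℝ} [l.IsCountablyGenerated]
    (hl : Tendsto (fun R : ℝ => R ^ 2) l atTop) :
    Tendsto (fun R : ℝ => ∫ τ in (0 : ℝ)..1, airyIntegrand x (R + τ * Complex.I)) l (𝓝 0) := by
  have hbound : ∀ R : ℝ, ∀ τ ∈ Set.uIoc (0 : ℝ) 1,
      ‖airyIntegrand x (R + τ * Complex.I)‖ ≤ Real.exp (1 / 3 + |x|) := fun R τ hτ => by
    rw [Set.uIoc_of_le zero_le_one] at hτ
    rw [norm_airyIntegrand, Real.exp_le_exp]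
    have hτ₃ : τ ^ 3 ≤ 1 := pow_le_one₀ hτ.1.le hτ.2
    have hR : 0 ≤ R ^ 2 * τ := mul_nonneg (sq_nonneg R) hτ.1.le
    have hx : -(τ * x) ≤ |x| := by nlinarith [neg_abs_le x, abs_nonneg x, hτ.1, hτ.2]
    linarith
  have hlim : ∀ τ ∈ Set.uIoc (0 : ℝ) 1,
      Tendsto (fun R : ℝ => airyIntegrand x (R + τ * Complex.I)) l (𝓝 0) := fun τ hτ => by
    rw [Set.uIoc_of_le zero_le_one] at hτ
    refine tendsto_zero_iff_norm_tendsto_zero.2 ?_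
    have hexp : Tendsto (fun R : ℝ => (τ ^ 3 / 3 - τ * x) + -(R ^ 2 * τ)) l atBot :=
      tendsto_const_nhds.add_atBot (tendsto_neg_atTop_atBot.comp (hl.atTop_mul_const hτ.1))
    refine (Real.tendsto_exp_atBot.comp hexp).congr fun R => ?_
    rw [Function.comp_apply, norm_airyIntegrand]
    congr 1
    ring
  simpa using intervalIntegral.tendsto_integral_filter_of_dominated_convergence _
    (.of_forall fun R =>
      ((differentiable_airyIntegrand x).continuous.comp (by fun_prop)).aestronglyMeasurable)
    (.of_forall fun R => ae_of_all _ (hbound R)) intervalIntegrable_const (ae_of_all _ hlim)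

/-- The improper Airy integral converges because it equals, up to the two vertical sides, an
absolutely convergent one. -/
theorem Ai_eq_integral_add_I (x : ℝ) :
    Ai x = ((1 / (2 * Real.pi) : ℝ) : ℂ) * ∫ t : ℝ, airyIntegrand x (t + Complex.I) := by
  rw [Ai]
  congr 1
  refine Tendsto.limUnder_eq ?_
  have hsq : Tendsto (fun R : ℝ => R ^ 2) atTop atTop := tendsto_pow_atTop two_ne_zero
  have hline := intervalIntegral_tendsto_integral (integrable_airyIntegrand_add_I x)
    tendsto_neg_atTop_atBot tendsto_id
  have hright := tendsto_integral_airyIntegrand_vertical x hsq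
  have hleft := (tendsto_integral_airyIntegrand_vertical x (l := atBot)
    ((hsq.comp tendsto_neg_atBot_atTop).congr fun R => by simp)).comp tendsto_neg_atTop_atBot
  have hsum := (hline.sub (hright.const_mul Complex.I)).add (hleft.const_mul Complex.I)
  simp only [mul_zero, sub_zero, add_zero] at hsum
  refine hsum.congr fun R => ?_
  have hrect := Complex.integral_boundary_rect_eq_zero_of_differentiableOn (airyIntegrand x)
    (-R : ℝ) (R + Complex.I) (differentiable_airyIntegrand x).differentiableOn
  simp only [Complex.ofReal_re, Complex.ofReal_im, Complex.add_re, Complex.add_im, Complex.I_re,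
    Complex.I_im, Complex.ofReal_zero, Complex.ofReal_one, zero_mul, one_mul, add_zero, zero_add,
    smul_eq_mul] at hrect
  change _ = ∫ t in (-R)..R, airyIntegrand x t
  simp only [Function.comp_apply, id_eq]
  linear_combination -hrect

theorem norm_Ai_le (x : ℝ) : ‖Ai x‖ ≤ Real.exp (1 / 3 - x) := by
  have hint : ‖∫ t : ℝ, airyIntegrand x (t + Complex.I)‖ ≤
      Real.exp (1 / 3 - x) * Real.sqrt Real.pi := by
    refine (norm_integral_le_integral_norm _).trans_eq ?_
    simp only [norm_airyIntegrand_add_I, integral_const_mul, integral_gaussian, div_one]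
  have hpi : Real.sqrt Real.pi ≤ 2 * Real.pi :=
    Real.sqrt_le_iff.2 ⟨by positivity, by nlinarith [Real.pi_gt_three]⟩
  calc ‖Ai x‖ = 1 / (2 * Real.pi) * ‖∫ t : ℝ, airyIntegrand x (t + Complex.I)‖ := by
        rw [Ai_eq_integral_add_I, norm_mul, Complex.norm_of_nonneg (by positivity)]
    _ ≤ 1 / (2 * Real.pi) * (Real.exp (1 / 3 - x) * (2 * Real.pi)) := by
        gcongr
        exact hint.trans (by gcongr)
    _ = Real.exp (1 / 3 - x) := by field_simp

end Airy

section AiryAsymptotics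

/-- The width `κ = (3cn)^{-1/3}` of the saddle of `e^{icns³}`, chosen so that `s = κz` turns the
exponent into the `iz³/3` of the Airy integrand. -/
def airyScale (c : ℝ) (n : ℕ) : ℝ := (3 * c * n) ^ (-(1 / 3) : ℝ)

theorem airyScale_pos {c : ℝ} (hc : 0 < c) {n : ℕ} (hn : 0 < n) : 0 < airyScale c n := by
  have : (0 : ℝ) < n := Nat.cast_pos.2 hn
  exact Real.rpow_pos_of_pos (by positivity) _

theorem natCast_mul_airyScale_pow_three {c : ℝ} (hc : 0 < c) {n : ℕ} (hn : 0 < n) :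
    n * airyScale c n ^ 3 = 1 / (3 * c) := by
  have : (0 : ℝ) < n := Nat.cast_pos.2 hn
  rw [airyScale, ← Real.rpow_mul_natCast (by positivity), show (-(1 / 3) : ℝ) * (3 : ℕ) = -1 by
    norm_num, Real.rpow_neg_one]
  field_simp

theorem tendsto_airyScale {c : ℝ} (hc : 0 < c) : Tendsto (airyScale c) atTop (𝓝 0) :=
  (tendsto_rpow_neg_atTop (by norm_num)).comp
    (tendsto_natCast_atTop_atTop.const_mul_atTop (by positivity))

/-- `G` is an Airy phase factor with cubic coefficient `c` on the rectangle `symmRect r δ`: it is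
holomorphic, has a degenerate saddle `G s = e^{ics³} + O(s⁴)` at the origin, and in the upper half
of the rectangle decays away from the imaginary axis as fast as `e^{ics³}` does. -/
structure IsAiryPhase (G : ℂ → ℂ) (c r δ : ℝ) : Prop where
  coeff_pos : 0 < c
  width_pos : 0 < r
  height_pos : 0 < δ
  differentiableOn : DifferentiableOn ℂ G (symmRect r δ)
  exists_norm_sub_le : ∃ C, 0 ≤ C ∧ ∀ s ∈ symmRect r δ,
    ‖G s - Complex.exp (Complex.I * (c * s ^ 3))‖ ≤ C * ‖s‖ ^ 4
  exists_norm_le : ∃ q > 0, ∃ C, ∀ x τ : ℝ, |x| ≤ r → τ ∈ Set.Icc 0 δ →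
    ‖G (x + τ * Complex.I)‖ ≤ Real.exp (C * τ ^ 3 - q * (x ^ 2 * τ))

/-- The integrand of the oscillatory integral with `n`-fold phase factor `G`, frequency `d` and
vector-valued amplitude `g`. -/
def oscIntegrand {E : Type*} [NormedAddCommGroup E] [NormedSpace ℂ E] (G : ℂ → ℂ) (g : ℂ → E)
    (n : ℕ) (d : ℝ) (s : ℂ) : E :=
  (Complex.exp (Complex.I * (d * s)) * G s ^ n) • g s

theorem differentiableOn_oscIntegrand {E : Type*} [NormedAddCommGroup E] [NormedSpace ℂ E]
    {G : ℂ → ℂ} {g : ℂ → E} {S : Set ℂ} (hG : DifferentiableOn ℂ G S) (hg : DifferentiableOn ℂ g S)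
    (n : ℕ) (d : ℝ) : DifferentiableOn ℂ (oscIntegrand G g n d) S :=
  DifferentiableOn.smul (((by fun_prop : Differentiable ℂ fun s : ℂ =>
    Complex.exp (Complex.I * (d * s))).differentiableOn).mul (hG.pow n)) hg

theorem norm_add_I_sq (ξ : ℝ) : ‖(ξ + Complex.I : ℂ)‖ ^ 2 = 1 + ξ ^ 2 := by
  simp only [Complex.sq_norm, Complex.normSq_apply, Complex.add_re, Complex.add_im,
    Complex.ofReal_re, Complex.ofReal_im, Complex.I_re, Complex.I_im]
  ring

theorem norm_add_I_le (ξ : ℝ) : ‖(ξ + Complex.I : ℂ)‖ ≤ (1 + ξ ^ 2) ^ 2 := by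
  have hone : 1 ≤ ‖(ξ + Complex.I : ℂ)‖ := by
    rw [← one_le_sq_iff₀ (norm_nonneg _), norm_add_I_sq]
    linarith [sq_nonneg ξ]
  calc ‖(ξ + Complex.I : ℂ)‖ ≤ ‖(ξ + Complex.I : ℂ)‖ ^ 4 := le_self_pow₀ hone (by norm_num)
    _ = (1 + ξ ^ 2) ^ 2 := by rw [← norm_add_I_sq]; ring

theorem mul_add_I_mem_symmRect {r δ κ ξ : ℝ} (hκ : 0 ≤ κ) (hκδ : κ ≤ δ) (hξ : |κ * ξ| ≤ r) :
    (κ * (ξ + Complex.I) : ℂ) ∈ symmRect r δ := by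
  rw [mem_symmRect]
  simpa [abs_mul, abs_of_nonneg hκ] using And.intro hξ hκδ

theorem airyIntegrand_mul (κ d : ℝ) (z : ℂ) : airyIntegrand (κ * d) z =
    Complex.exp (Complex.I * (d * (κ * z))) * Complex.exp (Complex.I * (z ^ 3 / 3)) := by
  rw [airyIntegrand, ← Complex.exp_add]
  push_cast
  ring_nf

theorem norm_exp_I_mul_mul_add_I (d κ ξ : ℝ) :
    ‖Complex.exp (Complex.I * (d * (κ * (ξ + Complex.I))))‖ = Real.exp (-(κ * d)) := by
  rw [Complex.norm_exp]
  congr 1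
  simp only [Complex.mul_re, Complex.mul_im, Complex.add_re, Complex.add_im, Complex.ofReal_re,
    Complex.ofReal_im, Complex.I_re, Complex.I_im]
  ring

theorem exp_I_mul_airyScale_pow {c : ℝ} (hc : 0 < c) {n : ℕ} (hn : 0 < n) (z : ℂ) :
    Complex.exp (Complex.I * (c * (airyScale c n * z) ^ 3)) ^ n =
      Complex.exp (Complex.I * (z ^ 3 / 3)) := by
  have hscale : (n * airyScale c n ^ 3 : ℂ) = 1 / (3 * c) := mod_cast
    natCast_mul_airyScale_pow_three hc hn
  have hc' : (c : ℂ) ≠ 0 := mod_cast hc.ne'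
  rw [← Complex.exp_nat_mul]
  congr 1
  calc (n : ℂ) * (Complex.I * (c * (airyScale c n * z) ^ 3))
      = Complex.I * c * z ^ 3 * (n * airyScale c n ^ 3) := by ring
    _ = Complex.I * (z ^ 3 / 3) := by rw [hscale]; field_simp

theorem norm_airyIntegrand_add_I_le_of_le {x ξ κ r p D : ℝ} (hp : p ≤ 1) (hr : 0 < r)
    (hx : |x| ≤ D) (hκ : 0 < κ) (hξ : r ≤ κ * |ξ|) :
    ‖airyIntegrand x (ξ + Complex.I)‖ ≤
      Real.exp (1 / 3 + D) / r * κ * ((1 + ξ ^ 2) ^ 2 * Real.exp (-p * ξ ^ 2)) := by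
  have habs : |ξ| ≤ (1 + ξ ^ 2) ^ 2 := by nlinarith [sq_abs ξ, abs_nonneg ξ, sq_nonneg (|ξ| - 1)]
  have hone : 1 ≤ κ / r * (1 + ξ ^ 2) ^ 2 := by
    rw [div_mul_eq_mul_div, one_le_div hr]
    exact hξ.trans (by gcongr)
  calc ‖airyIntegrand x (ξ + Complex.I)‖
      ≤ Real.exp (1 / 3 + D) * Real.exp (-p * ξ ^ 2) := by
        rw [norm_airyIntegrand_add_I]
        gcongr
        linarith [neg_abs_le x]
    _ ≤ Real.exp (1 / 3 + D) * Real.exp (-p * ξ ^ 2) * (κ / r * (1 + ξ ^ 2) ^ 2) :=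
        le_mul_of_one_le_right (by positivity) hone
    _ = _ := by ring

namespace IsAiryPhase

variable {G : ℂ → ℂ} {c r δ : ℝ}

theorem exists_norm_le_and_exp_norm_le (hG : IsAiryPhase G c r δ) :
    ∃ q, 0 < q ∧ q ≤ 3 * c ∧ ∃ C, 0 ≤ C ∧ ∀ x τ : ℝ, |x| ≤ r → τ ∈ Set.Icc 0 δ →
      ‖G (x + τ * Complex.I)‖ ≤ Real.exp (C * τ ^ 3 - q * (x ^ 2 * τ)) ∧
      ‖Complex.exp (Complex.I * (c * (x + τ * Complex.I) ^ 3))‖ ≤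
        Real.exp (C * τ ^ 3 - q * (x ^ 2 * τ)) := by
  obtain ⟨q, hq, C, hbound⟩ := hG.exists_norm_le
  have hc := hG.coeff_pos
  refine ⟨min q (3 * c), lt_min hq (by linarith), min_le_right _ _, max C c,
    hc.le.trans (le_max_right _ _), fun x τ hx hτ => ?_⟩
  have hτ₀ : 0 ≤ τ := hτ.1
  constructor
  · refine (hbound x τ hx hτ).trans ?_
    gcongr
    exacts [le_max_left _ _, min_le_left _ _]
  · have hre : (Complex.I * (c * (x + τ * Complex.I) ^ 3)).re =
        c * τ ^ 3 - 3 * c * (x ^ 2 * τ) := by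
      rw [mul_left_comm, Complex.re_ofReal_mul, re_I_mul_cube]
      ring
    rw [Complex.norm_exp, hre]
    gcongr
    exacts [le_max_right _ _, min_le_right _ _]

/-- On the scale `κ` the bound `e^{Cτ³ - qx²τ}` on the line `τ = κ` is `e^{κ³(C - qξ²)}`, whose
`m`-th power is Gaussian in `ξ` as long as `m` is comparable to `n ≍ κ⁻³`. -/
theorem exists_max_norm_pow_le (hG : IsAiryPhase G c r δ) :
    ∃ p, 0 < p ∧ p ≤ 1 ∧ ∃ M, 0 ≤ M ∧ ∀ n m : ℕ, 0 < n → m ≤ n → n ≤ 2 * m →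
      airyScale c n ≤ δ → ∀ ξ : ℝ, |airyScale c n * ξ| ≤ r →
      max ‖G (airyScale c n * (ξ + Complex.I))‖
        ‖Complex.exp (Complex.I * (c * (airyScale c n * (ξ + Complex.I)) ^ 3))‖ ^ m ≤
        M * Real.exp (-p * ξ ^ 2) := by
  obtain ⟨q, hq, hqc, C, hC, hbound⟩ := hG.exists_norm_le_and_exp_norm_le
  have hc := hG.coeff_pos
  have hp : q / (6 * c) ≤ 1 := by
    rw [div_le_one (by positivity)]
    linarith
  refine ⟨q / (6 * c), by positivity, hp, Real.exp (C / (3 * c)), by positivity,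
    fun n m hn hmn hnm hδ ξ hξ => ?_⟩
  have hscale := natCast_mul_airyScale_pow_three hc hn
  have hpos := airyScale_pos hc hn
  set κ := airyScale c n
  have hmn : (m : ℝ) * κ ^ 3 ≤ 1 / (3 * c) := by
    rw [← hscale]
    gcongr
  have hnm : 1 / (3 * c) ≤ 2 * (m * κ ^ 3) := by
    rw [← hscale, ← mul_assoc]
    gcongr
    exact_mod_cast hnm
  have hpoint : (κ * (ξ + Complex.I) : ℂ) = (κ * ξ : ℝ) + κ * Complex.I := by
    push_cast
    ring
  obtain ⟨hGle, hexp⟩ := hbound (κ * ξ) κ hξ ⟨hpos.le, hδ⟩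
  rw [← hpoint] at hGle hexp
  refine (pow_le_pow_left₀ (by positivity) (max_le hGle hexp) m).trans ?_
  rw [← Real.exp_nat_mul, ← Real.exp_add, Real.exp_le_exp]
  calc (m : ℝ) * (C * κ ^ 3 - q * ((κ * ξ) ^ 2 * κ))
      = C * (m * κ ^ 3) - q * ξ ^ 2 / 2 * (2 * (m * κ ^ 3)) := by ring
    _ ≤ C * (1 / (3 * c)) - q * ξ ^ 2 / 2 * (1 / (3 * c)) := by gcongr
    _ = C / (3 * c) + -(q / (6 * c)) * ξ ^ 2 := by field_simp; ring

theorem exists_norm_pow_sub_exp_le (hG : IsAiryPhase G c r δ) :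
    ∃ p, 0 < p ∧ p ≤ 1 ∧ ∃ M, 0 ≤ M ∧ ∀ n : ℕ, 2 ≤ n → airyScale c n ≤ δ → ∀ ξ : ℝ,
      |airyScale c n * ξ| ≤ r →
      ‖G (airyScale c n * (ξ + Complex.I)) ^ n‖ ≤ M * Real.exp (-p * ξ ^ 2) ∧
      ‖G (airyScale c n * (ξ + Complex.I)) ^ n -
          Complex.exp (Complex.I * ((ξ + Complex.I) ^ 3 / 3))‖ ≤
        M * airyScale c n * ((1 + ξ ^ 2) ^ 2 * Real.exp (-p * ξ ^ 2)) := by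
  obtain ⟨p, hp₀, hp₁, M, hM, hpow⟩ := hG.exists_max_norm_pow_le
  obtain ⟨C, hC, hcubic⟩ := hG.exists_norm_sub_le
  have hc := hG.coeff_pos
  refine ⟨p, hp₀, hp₁, max M (C / (3 * c) * M), le_max_of_le_left hM, fun n hn hδ ξ hξ => ?_⟩
  have hn₀ : 0 < n := by lia
  have hpos := airyScale_pos hc hn₀
  have hscale := natCast_mul_airyScale_pow_three hc hn₀
  have hpow_n := hpow n n hn₀ le_rfl (by lia) hδ ξ hξ
  have hpow_pred := hpow n (n - 1) hn₀ (by lia) (by lia) hδ ξ hξ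
  have hclose := hcubic _ (mul_add_I_mem_symmRect hpos.le hδ hξ)
  rw [norm_mul, Complex.norm_of_nonneg hpos.le] at hclose
  rw [← exp_I_mul_airyScale_pow hc hn₀]
  set κ := airyScale c n
  set s : ℂ := κ * (ξ + Complex.I)
  constructor
  · calc ‖G s ^ n‖ ≤ M * Real.exp (-p * ξ ^ 2) := by
          rw [norm_pow]
          exact (pow_le_pow_left₀ (norm_nonneg _) (le_max_left _ _) n).trans hpow_n
      _ ≤ _ := by gcongr; exact le_max_left _ _
  · calc ‖G s ^ n - Complex.exp (Complex.I * (c * s ^ 3)) ^ n‖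
        ≤ n * (C * (κ * ‖(ξ + Complex.I : ℂ)‖) ^ 4) * (M * Real.exp (-p * ξ ^ 2)) := by
          refine (norm_pow_sub_pow_le (le_max_left _ _) (le_max_right _ _) n).trans ?_
          gcongr
      _ = C * (n * κ ^ 3) * M * κ *
            ((‖(ξ + Complex.I : ℂ)‖ ^ 2) ^ 2 * Real.exp (-p * ξ ^ 2)) := by ring
      _ = C / (3 * c) * M * κ * ((1 + ξ ^ 2) ^ 2 * Real.exp (-p * ξ ^ 2)) := by
          rw [hscale, norm_add_I_sq]
          ring
      _ ≤ _ := by gcongr; exact le_max_right _ _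

variable {E : Type*} [NormedAddCommGroup E] [NormedSpace ℂ E] {g : ℂ → E}

theorem exists_norm_oscIntegrand_sub_le (hG : IsAiryPhase G c r δ)
    (hg : DifferentiableOn ℂ g (symmRect r δ)) (D : ℝ) :
    ∃ p, 0 < p ∧ p ≤ 1 ∧ ∃ K, 0 ≤ K ∧ ∀ n : ℕ, 2 ≤ n → airyScale c n ≤ δ →
      ∀ d : ℝ, |airyScale c n * d| ≤ D → ∀ ξ : ℝ, |airyScale c n * ξ| ≤ r →
      ‖oscIntegrand G g n d (airyScale c n * (ξ + Complex.I)) -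
          airyIntegrand (airyScale c n * d) (ξ + Complex.I) • g 0‖ ≤
        K * airyScale c n * ((1 + ξ ^ 2) ^ 2 * Real.exp (-p * ξ ^ 2)) := by
  obtain ⟨p, hp₀, hp₁, M, hM, hphase⟩ := hG.exists_norm_pow_sub_exp_le
  obtain ⟨L, hL, hlip⟩ := exists_norm_sub_le_mul_norm (𝕜 := ℂ) (isCompact_symmRect r δ)
    hg.continuousOn (hg.differentiableAt (symmRect_mem_nhds_zero hG.width_pos hG.height_pos))
  refine ⟨p, hp₀, hp₁, Real.exp D * (M * L + M * ‖g 0‖), by positivity,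
    fun n hn hδ d hd ξ hξ => ?_⟩
  have hpos := airyScale_pos hG.coeff_pos (show 0 < n by lia)
  obtain ⟨hnorm, hdiff⟩ := hphase n hn hδ ξ hξ
  have hglip := hlip _ (mul_add_I_mem_symmRect hpos.le hδ hξ)
  rw [norm_mul, Complex.norm_of_nonneg hpos.le] at hglip
  set κ := airyScale c n
  set s : ℂ := κ * (ξ + Complex.I)
  have hosc : ‖Complex.exp (Complex.I * (d * s))‖ ≤ Real.exp D := by
    rw [norm_exp_I_mul_mul_add_I, Real.exp_le_exp]
    exact (neg_le_abs _).trans hd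
  have hsplit : oscIntegrand G g n d s - airyIntegrand (κ * d) (ξ + Complex.I) • g 0 =
      Complex.exp (Complex.I * (d * s)) • (G s ^ n • (g s - g 0) +
        (G s ^ n - Complex.exp (Complex.I * ((ξ + Complex.I) ^ 3 / 3))) • g 0) := by
    rw [airyIntegrand_mul, oscIntegrand]
    module
  calc ‖oscIntegrand G g n d s - airyIntegrand (κ * d) (ξ + Complex.I) • g 0‖
      ≤ Real.exp D * (M * Real.exp (-p * ξ ^ 2) * (L * (κ * ‖(ξ + Complex.I : ℂ)‖)) +
          M * κ * ((1 + ξ ^ 2) ^ 2 * Real.exp (-p * ξ ^ 2)) * ‖g 0‖) := by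
        rw [hsplit, norm_smul]
        refine mul_le_mul hosc ((norm_add_le _ _).trans (add_le_add ?_ ?_)) (norm_nonneg _)
          (by positivity) <;> rw [norm_smul] <;> gcongr
    _ ≤ Real.exp D * (M * Real.exp (-p * ξ ^ 2) * (L * (κ * (1 + ξ ^ 2) ^ 2)) +
          M * κ * ((1 + ξ ^ 2) ^ 2 * Real.exp (-p * ξ ^ 2)) * ‖g 0‖) := by
        gcongr
        exact norm_add_I_le ξ
    _ = Real.exp D * (M * L + M * ‖g 0‖) * κ *
          ((1 + ξ ^ 2) ^ 2 * Real.exp (-p * ξ ^ 2)) := by ring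

/-- Beyond the rectangle only the Airy integrand is left, and its Gaussian tail is negligible. -/
theorem exists_norm_indicator_oscIntegrand_sub_le (hG : IsAiryPhase G c r δ)
    (hg : DifferentiableOn ℂ g (symmRect r δ)) (D : ℝ) :
    ∃ p, 0 < p ∧ ∃ K, 0 ≤ K ∧ ∀ n : ℕ, 2 ≤ n → airyScale c n ≤ δ →
      ∀ d : ℝ, |airyScale c n * d| ≤ D → ∀ ξ : ℝ,
      ‖(Set.Ioc (-(r / airyScale c n)) (r / airyScale c n)).indicator
          (fun ξ : ℝ => oscIntegrand G g n d (airyScale c n * (ξ + Complex.I))) ξ -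
          airyIntegrand (airyScale c n * d) (ξ + Complex.I) • g 0‖ ≤
        K * airyScale c n * ((1 + ξ ^ 2) ^ 2 * Real.exp (-p * ξ ^ 2)) := by
  obtain ⟨p, hp₀, hp₁, K, hK, hinside⟩ := hG.exists_norm_oscIntegrand_sub_le hg D
  refine ⟨p, hp₀, max K (Real.exp (1 / 3 + D) / r * ‖g 0‖), le_max_of_le_left hK,
    fun n hn hδ d hd ξ => ?_⟩
  have hpos := airyScale_pos hG.coeff_pos (show 0 < n by lia)
  by_cases hξ : ξ ∈ Set.Ioc (-(r / airyScale c n)) (r / airyScale c n)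
  · have hξr : |airyScale c n * ξ| ≤ r := by
      rw [abs_mul, abs_of_pos hpos, ← le_div_iff₀' hpos]
      exact abs_le.2 ⟨hξ.1.le, hξ.2⟩
    rw [Set.indicator_of_mem hξ]
    refine (hinside n hn hδ d hd ξ hξr).trans ?_
    gcongr
    exact le_max_left _ _
  · have hξr : r ≤ airyScale c n * |ξ| := by
      rw [← div_le_iff₀' hpos]
      by_contra! hlt
      exact hξ ⟨(abs_lt.1 hlt).1, (abs_lt.1 hlt).2.le⟩
    rw [Set.indicator_of_notMem hξ, zero_sub, norm_neg, norm_smul]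
    calc ‖airyIntegrand (airyScale c n * d) (ξ + Complex.I)‖ * ‖g 0‖
        ≤ Real.exp (1 / 3 + D) / r * airyScale c n *
            ((1 + ξ ^ 2) ^ 2 * Real.exp (-p * ξ ^ 2)) * ‖g 0‖ := by
          gcongr
          exact norm_airyIntegrand_add_I_le_of_le hp₁ hG.width_pos hd hpos hξr
      _ = Real.exp (1 / 3 + D) / r * ‖g 0‖ * airyScale c n *
            ((1 + ξ ^ 2) ^ 2 * Real.exp (-p * ξ ^ 2)) := by ring
      _ ≤ _ := by gcongr; exact le_max_right _ _

theorem integrable_indicator_oscIntegrand (hG : IsAiryPhase G c r δ)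
    (hg : DifferentiableOn ℂ g (symmRect r δ)) {n : ℕ} (hn : 0 < n) (hδ : airyScale c n ≤ δ)
    (d : ℝ) : Integrable ((Set.Ioc (-(r / airyScale c n)) (r / airyScale c n)).indicator
      fun ξ : ℝ => oscIntegrand G g n d (airyScale c n * (ξ + Complex.I))) := by
  have hpos := airyScale_pos hG.coeff_pos hn
  have hcont : ContinuousOn (fun ξ : ℝ => oscIntegrand G g n d (airyScale c n * (ξ + Complex.I)))
      (Set.Icc (-(r / airyScale c n)) (r / airyScale c n)) :=
    (differentiableOn_oscIntegrand hG.differentiableOn hg n d).continuousOn.comp (by fun_prop)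
      fun ξ hξ => by
        refine mul_add_I_mem_symmRect hpos.le hδ ?_
        rw [abs_mul, abs_of_pos hpos, ← le_div_iff₀' hpos]
        exact abs_le.2 hξ
  exact (integrable_indicator_iff measurableSet_Ioc).2
    (hcont.integrableOn_Icc.mono_set Set.Ioc_subset_Icc_self)

variable [CompleteSpace E]

theorem intervalIntegral_oscIntegrand_eq (hG : IsAiryPhase G c r δ)
    (hg : DifferentiableOn ℂ g (symmRect r δ)) {n : ℕ} (hn : 0 < n) (hδ : airyScale c n ≤ δ)
    {d : ℝ} (hsides : ∀ τ : ℝ, |τ| ≤ δ →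
      oscIntegrand G g n d (-r + τ * Complex.I) = oscIntegrand G g n d (r + τ * Complex.I)) :
    ∫ x in -r..r, oscIntegrand G g n d x = airyScale c n •
      ∫ ξ : ℝ, (Set.Ioc (-(r / airyScale c n)) (r / airyScale c n)).indicator
        (fun ξ : ℝ => oscIntegrand G g n d (airyScale c n * (ξ + Complex.I))) ξ := by
  have hpos := airyScale_pos hG.coeff_pos hn
  have hr := hG.width_pos
  set κ := airyScale c n
  calc ∫ x in -r..r, oscIntegrand G g n d x
      = ∫ x in -r..r, oscIntegrand G g n d (x + κ * Complex.I) :=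
        intervalIntegral_eq_add_mul_I
          (differentiableOn_oscIntegrand hG.differentiableOn hg n d) hr.le
          ⟨hpos.le, hδ⟩ fun τ hτ => hsides τ ((abs_of_nonneg hτ.1).trans_le (hτ.2.trans hδ))
    _ = κ • ∫ ξ in -(r / κ)..r / κ, oscIntegrand G g n d ((κ * ξ : ℝ) + κ * Complex.I) := by
        rw [intervalIntegral.integral_comp_mul_left
          (fun x : ℝ => oscIntegrand G g n d (x + κ * Complex.I)) hpos.ne', smul_smul,
          mul_inv_cancel₀ hpos.ne', one_smul, mul_neg, mul_div_cancel₀ _ hpos.ne']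
    _ = _ := by
        rw [intervalIntegral.integral_of_le (by linarith [div_pos hr hpos]),
          integral_indicator measurableSet_Ioc]
        simp only [Complex.ofReal_mul, mul_add]

theorem exists_norm_integral_oscIntegrand_sub_Ai_le (hG : IsAiryPhase G c r δ)
    (hg : DifferentiableOn ℂ g (symmRect r δ)) (D : ℝ) :
    ∃ K, 0 ≤ K ∧ ∀ᶠ n : ℕ in atTop, ∀ d : ℝ, |airyScale c n * d| ≤ D →
      (∀ τ : ℝ, |τ| ≤ δ →
        oscIntegrand G g n d (-r + τ * Complex.I) = oscIntegrand G g n d (r + τ * Complex.I)) →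
      ‖(∫ x in -r..r, oscIntegrand G g n d x) -
          (2 * Real.pi * airyScale c n * Ai (airyScale c n * d)) • g 0‖ ≤
        K * airyScale c n ^ 2 := by
  obtain ⟨p, hp, K, hK, hbound⟩ := hG.exists_norm_indicator_oscIntegrand_sub_le hg D
  have hgauss := integrable_sq_one_add_sq_mul_exp hp
  refine ⟨K * ∫ ξ : ℝ, (1 + ξ ^ 2) ^ 2 * Real.exp (-p * ξ ^ 2),
    mul_nonneg hK (integral_nonneg fun ξ => by positivity), ?_⟩
  filter_upwards [eventually_ge_atTop 2,
    (tendsto_airyScale hG.coeff_pos).eventually (eventually_le_nhds hG.height_pos)]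
    with n hn hδ d hd hsides
  have hn₀ : 0 < n := by lia
  have hpos := airyScale_pos hG.coeff_pos hn₀
  have hAi : (2 * Real.pi * airyScale c n * Ai (airyScale c n * d)) • g 0 = airyScale c n •
      ∫ ξ : ℝ, airyIntegrand (airyScale c n * d) (ξ + Complex.I) • g 0 := by
    rw [integral_smul_const, ← Complex.coe_smul, smul_smul, Ai_eq_integral_add_I]
    congr 1
    push_cast
    field_simp
  rw [hG.intervalIntegral_oscIntegrand_eq hg hn₀ hδ hsides, hAi, ← smul_sub, ← integral_sub
    (hG.integrable_indicator_oscIntegrand hg hn₀ hδ d)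
    ((integrable_airyIntegrand_add_I _).smul_const _), norm_smul, Real.norm_of_nonneg hpos.le]
  calc airyScale c n * ‖∫ ξ : ℝ, _‖
      ≤ airyScale c n * ∫ ξ : ℝ,
          K * airyScale c n * ((1 + ξ ^ 2) ^ 2 * Real.exp (-p * ξ ^ 2)) := by
        gcongr
        exact norm_integral_le_of_norm_le (hgauss.const_mul _)
          (ae_of_all _ (hbound n hn hδ d hd))
    _ = _ := by
        rw [integral_const_mul]
        ring

end IsAiryPhase

end AiryAsymptotics

section LogarithmicDerivative

variable {G H : ℂ → ℂ} {c r δ : ℝ}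

theorem exists_norm_sub_exp_cube_le {K : Set ℂ} (hK : IsCompact K) (hK₀ : StarConvex ℝ 0 K)
    (hG : ∀ s ∈ K, HasDerivAt G (Complex.I * H s * G s) s) (hG₀ : G 0 = 1)
    (hH : ContinuousOn H K) (hH₀ : (fun s => H s - 3 * c * s ^ 2) =O[𝓝 0] fun s => ‖s‖ ^ 3) :
    ∃ C, 0 ≤ C ∧ ∀ s ∈ K, ‖G s - Complex.exp (Complex.I * (c * s ^ 3))‖ ≤ C * ‖s‖ ^ 4 := by
  let e : ℂ → ℂ := fun s => Complex.exp (Complex.I * (c * s ^ 3))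
  have he : ∀ s, HasDerivAt (fun s => (e s)⁻¹) (-(Complex.I * (3 * c * s ^ 2)) * (e s)⁻¹) s :=
    fun s => by
      simp only [e, ← Complex.exp_neg]
      refine (((hasDerivAt_pow 3 s).const_mul (c : ℂ)).const_mul Complex.I).fun_neg.cexp.congr_deriv
        ?_
      push_cast
      ring
  have hquot : ∀ s ∈ K, HasDerivAt (fun s => G s * (e s)⁻¹)
      (Complex.I * (H s - 3 * c * s ^ 2) * (G s * (e s)⁻¹)) s := fun s hs =>
    ((hG s hs).mul (he s)).congr_deriv (by ring)
  obtain ⟨B, hB, hHB⟩ := exists_norm_le_mul_norm_pow_of_isBigO hK (hH.sub (by fun_prop)) hH₀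
  obtain ⟨M, hM⟩ := hK.exists_bound_of_continuousOn fun s hs =>
    (hquot s hs).continuousAt.continuousWithinAt
  obtain ⟨N, hN⟩ := hK.exists_bound_of_continuousOn (f := e) (by fun_prop)
  refine ⟨|N| * (B * |M|), by positivity, fun s hs => ?_⟩
  have hdiff : ‖G s * (e s)⁻¹ - 1‖ ≤ B * |M| * ‖s‖ ^ 4 := by
    have h := norm_image_sub_image_zero_le (C := B * |M|) (k := 3) hK₀ (by positivity)
      (fun s hs => (hquot s hs).hasDerivWithinAt) (fun s hs => ?_) s hs
    · simpa [e, hG₀] using h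
    · calc _ = ‖H s - 3 * c * s ^ 2‖ * ‖G s * (e s)⁻¹‖ := by
            rw [norm_mul, norm_mul, Complex.norm_I, one_mul]
        _ ≤ B * ‖s‖ ^ 3 * |M| := by
            gcongr
            exacts [hHB s hs, (hM s hs).trans (le_abs_self M)]
        _ = _ := by ring
  calc ‖G s - e s‖ = ‖e s‖ * ‖G s * (e s)⁻¹ - 1‖ := by
        rw [← norm_mul, mul_sub, mul_one, mul_left_comm, mul_inv_cancel₀ (Complex.exp_ne_zero _),
          mul_one]
    _ ≤ |N| * (B * |M| * ‖s‖ ^ 4) := by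
        gcongr
        exact (hN s hs).trans (le_abs_self N)
    _ = _ := by ring

theorem exists_norm_le_exp_of_hasDerivAt {U : Set ℂ} (hU : IsOpen U) (hrect : symmRect r δ ⊆ U)
    (hG : ∀ s ∈ U, HasDerivAt G (Complex.I * H s * G s) s) (hH : DifferentiableOn ℂ H U)
    (hreal : ∀ x : ℝ, (x : ℂ) ∈ U → (H x).im = 0) (hunit : ∀ x : ℝ, |x| ≤ r → ‖G x‖ ≤ 1)
    {q : ℝ} (hlower : ∀ x : ℝ, |x| ≤ r → q * x ^ 2 ≤ (H x).re) :
    ∃ C, ∀ x τ : ℝ, |x| ≤ r → τ ∈ Set.Icc 0 δ →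
      ‖G (x + τ * Complex.I)‖ ≤ Real.exp (C * τ ^ 3 - q * (x ^ 2 * τ)) := by
  obtain ⟨C, -, hC⟩ := exists_abs_re_add_mul_I_sub_le hU hH hrect hreal
  refine ⟨C / 3, fun x τ hx hτ => ?_⟩
  have hmem : ∀ t ∈ Set.Icc 0 τ, (x + t * Complex.I : ℂ) ∈ U := fun t ht =>
    hrect (add_mul_I_mem_symmRect.2 ⟨hx, (abs_of_nonneg ht.1).trans_le (ht.2.trans hτ.2)⟩)
  have hvert : ∀ t ∈ Set.Icc 0 τ, HasDerivAt (fun t : ℝ => G (x + t * Complex.I))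
      (-H (x + t * Complex.I) * G (x + t * Complex.I)) t := fun t ht =>
    ((hG _ (hmem t ht)).comp t (hasDerivAt_add_mul_I x t)).congr_deriv (by
      linear_combination (H (x + t * Complex.I) * G (x + t * Complex.I)) * Complex.I_sq)
  have hrate : ∀ t ∈ Set.Icc 0 τ, (-H (x + t * Complex.I)).re ≤ C * t ^ 2 - q * x ^ 2 :=
    fun t ht => by
      rw [Complex.neg_re]
      linarith [(abs_le.1 (hC x t hx ⟨ht.1, ht.2.trans hτ.2⟩)).1, hlower x hx]
  have hprim : ∀ t ∈ Set.Icc 0 τ,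
      HasDerivAt (fun t : ℝ => C / 3 * t ^ 3 - q * x ^ 2 * t) (C * t ^ 2 - q * x ^ 2) t :=
    fun t _ => (((hasDerivAt_pow 3 t).const_mul (C / 3)).sub
      ((hasDerivAt_id t).const_mul (q * x ^ 2))).congr_deriv (by norm_num; ring)
  have h := norm_le_norm_mul_exp_of_hasDerivAt hτ.1 hvert hprim hrate
  simp only [Complex.ofReal_zero, zero_mul, add_zero, ne_eq, OfNat.ofNat_ne_zero,
    not_false_eq_true, zero_pow, mul_zero, sub_zero, mul_assoc] at h
  exact h.trans (mul_le_of_le_one_left (by positivity) (hunit x hx))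

theorem IsAiryPhase.of_hasDerivAt (hc : 0 < c) (hr : 0 < r) (hδ : 0 < δ) {U : Set ℂ}
    (hU : IsOpen U) (hrect : symmRect r δ ⊆ U)
    (hG : ∀ s ∈ U, HasDerivAt G (Complex.I * H s * G s) s) (hG₀ : G 0 = 1)
    (hH : DifferentiableOn ℂ H U)
    (hH₀ : (fun s => H s - 3 * c * s ^ 2) =O[𝓝 0] fun s => ‖s‖ ^ 3)
    (hreal : ∀ x : ℝ, (x : ℂ) ∈ U → (H x).im = 0) (hunit : ∀ x : ℝ, |x| ≤ r → ‖G x‖ ≤ 1)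
    {q : ℝ} (hq : 0 < q) (hlower : ∀ x : ℝ, |x| ≤ r → q * x ^ 2 ≤ (H x).re) :
    IsAiryPhase G c r δ where
  coeff_pos := hc
  width_pos := hr
  height_pos := hδ
  differentiableOn s hs := (hG s (hrect hs)).differentiableAt.differentiableWithinAt
  exists_norm_sub_le := exists_norm_sub_exp_cube_le (isCompact_symmRect r δ)
    (starConvex_symmRect r δ) (fun s hs => hG s (hrect hs)) hG₀ (hH.continuousOn.mono hrect) hH₀
  exists_norm_le := ⟨q, hq, exists_norm_le_exp_of_hasDerivAt hU hrect hG hH hreal hunit hlower⟩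

end LogarithmicDerivative

section WallPhase

/-- The branch of `cos ν(s)` equal to `1` at `0`, where `sin ν = A sin s` defines the dispersion
relation `ν` of the walk with `|a| = A`. -/
def cosNu (A : ℝ) (s : ℂ) : ℂ := Complex.sqrt (1 - (A * Complex.sin s) ^ 2)

/-- A neighbourhood of the real axis on which `ν` has no branch point. -/
def cosNuDomain (A : ℝ) : Set ℂ := {s | ‖A * Complex.sin s‖ < 1}

/-- The branch `e^{-iν(s)}` of the spectrum of the walk. -/
def phaseFactor (A : ℝ) (s : ℂ) : ℂ := cosNu A s - Complex.I * (A * Complex.sin s)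

/-- The factor `e^{i(As - ν(s))}`, whose `n`-th power oscillates at the wall `x = nA`. -/
def wallPhase (A : ℝ) (s : ℂ) : ℂ := Complex.exp (Complex.I * (A * s)) * phaseFactor A s

/-- The derivative `A - ν'(s)` of the phase of `wallPhase`. -/
def wallPhaseDeriv (A : ℝ) (s : ℂ) : ℂ := A * (1 - Complex.cos s / cosNu A s)

variable {A : ℝ} {s : ℂ}

theorem cosNu_sq (A : ℝ) (s : ℂ) : cosNu A s ^ 2 = 1 - (A * Complex.sin s) ^ 2 :=
  Complex.cpow_ofNat_inv_pow _ 2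

theorem cosNu_zero (A : ℝ) : cosNu A 0 = 1 := by simp [cosNu]

theorem cosNu_add_pi (A : ℝ) (s : ℂ) : cosNu A (s + Real.pi) = cosNu A s := by
  simp [cosNu, Complex.sin_add_pi]

theorem cosNu_ofReal (hA : |A| ≤ 1) (x : ℝ) :
    cosNu A x = Real.sqrt (1 - (A * Real.sin x) ^ 2) := by
  have h : |A * Real.sin x| ≤ 1 := by
    rw [abs_mul]
    exact mul_le_one₀ hA (abs_nonneg _) (Real.abs_sin_le_one x)
  have hcast : 1 - (A * Complex.sin x) ^ 2 = ((1 - (A * Real.sin x) ^ 2 : ℝ) : ℂ) := by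
    push_cast
    rfl
  rw [cosNu, hcast, Complex.sqrt_of_nonneg, Complex.ofReal_re]
  exact Complex.zero_le_real.2 (sub_nonneg.2 ((sq_le_one_iff_abs_le_one _).2 h))

theorem phaseFactor_add_phaseFactor_add_pi (A : ℝ) (s : ℂ) :
    phaseFactor A s + phaseFactor A (s + Real.pi) = 2 * cosNu A s := by
  simp only [phaseFactor, cosNu_add_pi, Complex.sin_add_pi]
  ring

theorem phaseFactor_mul_phaseFactor_add_pi (A : ℝ) (s : ℂ) :
    phaseFactor A s * phaseFactor A (s + Real.pi) = 1 := by
  simp only [phaseFactor, cosNu_add_pi, Complex.sin_add_pi]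
  linear_combination cosNu_sq A s - (A * Complex.sin s) ^ 2 * Complex.I_sq

theorem phaseFactor_add_pi_add_pi (A : ℝ) (s : ℂ) :
    phaseFactor A (s + Real.pi + Real.pi) = phaseFactor A s := by
  simp only [phaseFactor, cosNu_add_pi, Complex.sin_add_pi, neg_neg]

theorem norm_phaseFactor_ofReal (hA : |A| ≤ 1) (x : ℝ) : ‖phaseFactor A x‖ = 1 := by
  have hconj : (starRingEnd ℂ) (phaseFactor A x) = phaseFactor A (x + Real.pi) := by
    simp only [phaseFactor, cosNu_add_pi, cosNu_ofReal hA, Complex.sin_add_pi, map_sub, map_mul,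
      Complex.conj_ofReal, Complex.conj_I, ← Complex.ofReal_sin]
    ring
  have h := phaseFactor_mul_phaseFactor_add_pi A x
  rw [← hconj, Complex.mul_conj, Complex.normSq_eq_norm_sq] at h
  exact (pow_eq_one_iff_of_nonneg (norm_nonneg _) two_ne_zero).1 (by exact_mod_cast h)

theorem norm_wallPhase_ofReal (hA : |A| ≤ 1) (x : ℝ) : ‖wallPhase A x‖ = 1 := by
  rw [wallPhase, norm_mul, norm_phaseFactor_ofReal hA, mul_one, mul_comm, ← Complex.ofReal_mul,
    Complex.norm_exp_ofReal_mul_I]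

theorem norm_sin_le_cosh_im (s : ℂ) : ‖Complex.sin s‖ ≤ Real.cosh s.im := by
  rw [Complex.sin, Real.cosh_eq, norm_div, norm_mul, Complex.norm_I, mul_one, RCLike.norm_ofNat]
  gcongr
  refine (norm_sub_le _ _).trans (le_of_eq ?_)
  simp [Complex.norm_exp]

theorem exists_abs_im_le_imp_mem_cosNuDomain (hA : |A| < 1) :
    ∃ δ > 0, ∀ s : ℂ, |s.im| ≤ δ → s ∈ cosNuDomain A := by
  have hlim : ∀ᶠ t in 𝓝 (0 : ℝ), |A| * Real.cosh t < 1 :=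
    (continuous_const.mul Real.continuous_cosh).continuousAt.eventually_lt continuousAt_const
      (by simpa using hA)
  obtain ⟨δ, hδ, h⟩ := (Metric.nhds_basis_closedBall.eventually_iff).1 hlim
  refine ⟨δ, hδ, fun s hs => ?_⟩
  calc ‖A * Complex.sin s‖ = |A| * ‖Complex.sin s‖ := by simp
    _ ≤ |A| * Real.cosh s.im := by
        gcongr
        exact norm_sin_le_cosh_im s
    _ < 1 := h (by simpa using hs)

theorem isOpen_cosNuDomain (A : ℝ) : IsOpen (cosNuDomain A) :=
  isOpen_lt (by fun_prop) continuous_const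

theorem cosNu_ne_zero (hs : s ∈ cosNuDomain A) : cosNu A s ≠ 0 := fun h => by
  have hsq : (A * Complex.sin s) ^ 2 = 1 := by
    linear_combination cosNu_sq A s - cosNu A s * h
  have hlt : ‖(A * Complex.sin s) ^ 2‖ < 1 := by
    rw [norm_pow]
    exact pow_lt_one₀ (norm_nonneg _) hs two_ne_zero
  simp [hsq] at hlt

theorem hasDerivAt_cosNu (hs : s ∈ cosNuDomain A) :
    HasDerivAt (cosNu A) (-(A ^ 2 * Complex.sin s * Complex.cos s) / cosNu A s) s := by
  have hslit : 1 - (A * Complex.sin s) ^ 2 ∈ Complex.slitPlane := by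
    rw [sub_eq_add_neg]
    refine Complex.mem_slitPlane_of_norm_lt_one ?_
    rw [norm_neg, norm_pow]
    exact pow_lt_one₀ (norm_nonneg _) hs two_ne_zero
  have hinner : HasDerivAt (fun s => 1 - (A * Complex.sin s) ^ 2)
      (-(2 * (A * Complex.sin s) * (A * Complex.cos s))) s :=
    ((((Complex.hasDerivAt_sin s).const_mul (A : ℂ)).pow 2).const_sub 1).congr_deriv (by simp)
  have hdiff : DifferentiableAt ℂ (cosNu A) s :=
    (hinner.cpow_const (c := 2⁻¹) hslit).differentiableAt
  have hsq := hdiff.hasDerivAt.fun_pow 2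
  simp only [cosNu_sq] at hsq
  have hderiv := hsq.unique hinner
  refine hdiff.hasDerivAt.congr_deriv ((eq_div_iff (cosNu_ne_zero hs)).2 ?_)
  push_cast at hderiv
  linear_combination hderiv / 2

theorem hasDerivAt_wallPhase (hs : s ∈ cosNuDomain A) :
    HasDerivAt (wallPhase A) (Complex.I * wallPhaseDeriv A s * wallPhase A s) s := by
  have hne := cosNu_ne_zero hs
  refine (((hasDerivAt_id s).const_mul (A : ℂ)).const_mul Complex.I).cexp.mul
    ((hasDerivAt_cosNu hs).sub (((Complex.hasDerivAt_sin s).const_mul (A : ℂ)).const_mul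
      Complex.I)) |>.congr_deriv ?_
  simp only [wallPhaseDeriv, wallPhase, phaseFactor, Pi.sub_apply, id]
  field_simp
  linear_combination (-(Complex.sin s * A ^ 2 * Complex.cos s)) * Complex.I_sq

theorem differentiableOn_wallPhaseDeriv (A : ℝ) :
    DifferentiableOn ℂ (wallPhaseDeriv A) (cosNuDomain A) := fun s hs =>
  (((Complex.hasDerivAt_cos s).div (hasDerivAt_cosNu hs) (cosNu_ne_zero hs)).const_sub 1
    |>.const_mul (A : ℂ)).differentiableAt.differentiableWithinAt

theorem wallPhaseDeriv_ofReal (hA : |A| ≤ 1) (x : ℝ) : wallPhaseDeriv A x =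
    (A * (1 - Real.cos x / Real.sqrt (1 - (A * Real.sin x) ^ 2)) : ℝ) := by
  rw [wallPhaseDeriv, cosNu_ofReal hA]
  push_cast
  rfl

theorem wallPhaseDeriv_eq_mul_sin_sq (hs : s ∈ cosNuDomain A)
    (hne : cosNu A s + Complex.cos s ≠ 0) : wallPhaseDeriv A s =
      A * (1 - A ^ 2) / (cosNu A s * (cosNu A s + Complex.cos s)) * Complex.sin s ^ 2 := by
  have hne' := cosNu_ne_zero hs
  rw [wallPhaseDeriv]
  field_simp
  linear_combination (A : ℂ) * cosNu_sq A s - (A : ℂ) * Complex.sin_sq_add_cos_sq s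

theorem wallPhaseDeriv_sub_isBigO (A : ℝ) :
    (fun s => wallPhaseDeriv A s - 3 * (A * (1 - A ^ 2) / 6 : ℝ) * s ^ 2)
      =O[𝓝 0] fun s => ‖s‖ ^ 3 := by
  have h₀ : (0 : ℂ) ∈ cosNuDomain A := by simp [cosNuDomain]
  let v : ℂ → ℂ := fun s => cosNu A s * (cosNu A s + Complex.cos s)
  have hv₀ : v 0 = 2 := by
    simp only [v, cosNu_zero, Complex.cos_zero]
    norm_num
  have hv : DifferentiableAt ℂ v 0 :=
    have hu := (hasDerivAt_cosNu h₀).differentiableAt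
    hu.mul (hu.add Complex.differentiableAt_cos)
  have hsin : Differentiable ℂ (dslope Complex.sin 0) := by
    simpa [← differentiableOn_univ, Complex.differentiableOn_dslope] using
      Complex.differentiable_sin
  let k : ℂ → ℂ := fun s => A * (1 - A ^ 2) / v s * dslope Complex.sin 0 s ^ 2
  have hk : DifferentiableAt ℂ k 0 :=
    ((differentiableAt_const _).div hv (by simp [hv₀])).mul ((hsin 0).pow 2)
  have hk₀ : k 0 = 3 * (A * (1 - A ^ 2) / 6 : ℝ) := by
    simp only [k, hv₀, dslope_same, Complex.deriv_sin, Complex.cos_zero]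
    push_cast
    ring
  have hbig : (fun s => (k s - k 0) * s ^ 2) =O[𝓝 0] fun s => s * s ^ 2 :=
    IsBigO.mul (by simpa using hk.isBigO_sub) (isBigO_refl _ _)
  refine hbig.norm_right.congr' ?_ (Eventually.of_forall fun s => by
    simp only [← pow_succ', norm_pow])
  filter_upwards [(isOpen_cosNuDomain A).mem_nhds h₀,
    hv.continuousAt.eventually_ne (by simp [hv₀] : v 0 ≠ 0)] with s hs hvs
  have hslope : s * dslope Complex.sin 0 s = Complex.sin s := by
    simpa using sub_smul_dslope Complex.sin 0 s
  rw [← hk₀, sub_mul, wallPhaseDeriv_eq_mul_sin_sq hs (right_ne_zero_of_mul hvs), ← hslope]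
  ring

theorem half_mul_one_sub_le_one_sub_div_sqrt {B t : ℝ} (hB : B ∈ Set.Ioc 0 1)
    (ht : t ∈ Set.Icc (-1) 1) :
    B / 2 * (1 - t) ≤ 1 - t / Real.sqrt (t ^ 2 + B * (1 - t ^ 2)) := by
  obtain ⟨⟨hB₀, hB₁⟩, ht₀, ht₁⟩ := hB, ht
  rcases le_total t 0 with ht | ht
  · have hquot : t / Real.sqrt (t ^ 2 + B * (1 - t ^ 2)) ≤ 0 :=
      div_nonpos_of_nonpos_of_nonneg ht (Real.sqrt_nonneg _)
    nlinarith
  · set w := B / 2 * (1 - t)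
    have hw : 0 ≤ 1 - w := sub_nonneg.2 (mul_le_one₀ (by linarith) (by linarith) (by linarith))
    have hsq : 0 < t ^ 2 + B * (1 - t ^ 2) := by nlinarith
    rw [le_sub_comm, div_le_iff₀ (Real.sqrt_pos.2 hsq)]
    refine le_of_sq_le_sq ?_ (mul_nonneg hw (Real.sqrt_nonneg _))
    rw [mul_pow, Real.sq_sqrt hsq.le]
    calc t ^ 2 ≤ (1 - 2 * w) * (t ^ 2 + B * (1 - t ^ 2)) := by
          have h : 0 ≤ B * (1 - t) * (t + (1 - B) * (1 - t ^ 2)) := by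
            have : 0 ≤ (1 - B) * (1 - t ^ 2) := by
              refine mul_nonneg ?_ ?_ <;> nlinarith
            have : 0 ≤ B * (1 - t) := by
              refine mul_nonneg ?_ ?_ <;> linarith
            positivity
          linear_combination h
      _ ≤ (1 - w) ^ 2 * (t ^ 2 + B * (1 - t ^ 2)) := by
          gcongr
          nlinarith [sq_nonneg w]

theorem mul_sq_le_re_wallPhaseDeriv (hA : A ∈ Set.Ioo 0 1) {x : ℝ} (hx : |x| ≤ Real.pi) :
    A * (1 - A ^ 2) / Real.pi ^ 2 * x ^ 2 ≤ (wallPhaseDeriv A x).re := by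
  have hA₂ : 1 - A ^ 2 ∈ Set.Ioc 0 1 := by
    constructor <;> nlinarith [hA.1, hA.2]
  have hsq : 1 - (A * Real.sin x) ^ 2
      = Real.cos x ^ 2 + (1 - A ^ 2) * (1 - Real.cos x ^ 2) := by
    linear_combination (A ^ 2) * (-Real.sin_sq_add_cos_sq x)
  rw [wallPhaseDeriv_ofReal ((abs_of_pos hA.1).trans_le hA.2.le), Complex.ofReal_re, hsq]
  calc A * (1 - A ^ 2) / Real.pi ^ 2 * x ^ 2
      = A * ((1 - A ^ 2) / 2 * (2 / Real.pi ^ 2 * x ^ 2)) := by ring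
    _ ≤ A * ((1 - A ^ 2) / 2 * (1 - Real.cos x)) := by
        gcongr
        · exact hA.1.le
        · linarith [hA₂.1]
        · linarith [Real.cos_le_one_sub_mul_cos_sq hx]
    _ ≤ _ := mul_le_mul_of_nonneg_left
        (half_mul_one_sub_le_one_sub_div_sqrt hA₂ (Real.cos_mem_Icc x)) hA.1.le

theorem exists_isAiryPhase_wallPhase (hA : A ∈ Set.Ioo 0 1) :
    ∃ δ, symmRect Real.pi δ ⊆ cosNuDomain A ∧
      IsAiryPhase (wallPhase A) (A * (1 - A ^ 2) / 6) Real.pi δ := by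
  have hA₂ : 0 < 1 - A ^ 2 := by nlinarith [hA.1, hA.2]
  have hA₁ : |A| < 1 := (abs_of_pos hA.1).trans_lt hA.2
  obtain ⟨δ, hδ, hstrip⟩ := exists_abs_im_le_imp_mem_cosNuDomain hA₁
  have hrect : symmRect Real.pi δ ⊆ cosNuDomain A := fun s hs => hstrip s (mem_symmRect.1 hs).2
  refine ⟨δ, hrect, .of_hasDerivAt (by have := hA.1; positivity) Real.pi_pos hδ
    (isOpen_cosNuDomain A) hrect (fun s hs => hasDerivAt_wallPhase hs)
    (by simp [wallPhase, phaseFactor, cosNu_zero]) (differentiableOn_wallPhaseDeriv A)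
    (wallPhaseDeriv_sub_isBigO A) (fun x _ => ?_) (fun x _ => (norm_wallPhase_ofReal hA₁.le x).le)
    (q := A * (1 - A ^ 2) / Real.pi ^ 2) ?_ (fun x hx => mul_sq_le_re_wallPhaseDeriv hA hx)⟩
  · rw [wallPhaseDeriv_ofReal hA₁.le, Complex.ofReal_im]
  · have := hA.1
    positivity

end WallPhase

section Walk

theorem pow_eq_of_sq_eq {K R : Type*} [Field K] [Ring R] [Algebra K R] {T : R} {l r : K}
    (hlr : l ≠ r) (hT : T ^ 2 = (l + r) • T - (l * r) • 1) (n : ℕ) :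
    T ^ n = l ^ n • ((l - r)⁻¹ • (T - r • 1)) + r ^ n • ((r - l)⁻¹ • (T - l • 1)) := by
  have hl : T * (T - r • 1) = l • (T - r • 1) := by
    rw [mul_sub, ← sq, hT, mul_smul_comm, mul_one, smul_sub, smul_smul, add_smul]
    abel
  have hr : T * (T - l • 1) = r • (T - l • 1) := by
    rw [mul_sub, ← sq, hT, mul_smul_comm, mul_one, smul_sub, smul_smul, add_smul, mul_comm l]
    abel
  induction n with
  | zero =>
    have hlr' : l - r ≠ 0 := sub_ne_zero.2 hlr
    rw [← neg_sub l r, inv_neg, neg_smul, pow_zero, pow_zero, pow_zero, one_smul, one_smul,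
      ← sub_eq_add_neg, ← smul_sub, sub_sub_sub_cancel_left, ← sub_smul, smul_smul,
      inv_mul_cancel₀ hlr', one_smul]
  | succ n ih =>
    rw [pow_succ', ih, mul_add, mul_smul_comm, mul_smul_comm, mul_smul_comm, mul_smul_comm, hl, hr,
      pow_succ, pow_succ]
    module

theorem integral_exp_I_mul_zpow (x : ℤ) :
    ∫ s : ℝ in -Real.pi..Real.pi, Complex.exp (Complex.I * s) ^ x =
      if x = 0 then 2 * (Real.pi : ℂ) else 0 := by
  split_ifs with hx
  · subst hx
    simp only [zpow_zero, intervalIntegral.integral_const, sub_neg_eq_add, Complex.real_smul,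
      Complex.ofReal_add, mul_one, two_mul]
  · have hx' : (x : ℂ) * Complex.I ≠ 0 := mul_ne_zero (mod_cast hx) Complex.I_ne_zero
    have hper : Complex.exp (x * Complex.I * Real.pi)
        = Complex.exp (x * Complex.I * (-Real.pi : ℝ)) :=
      Complex.exp_eq_exp_iff_exists_int.2 ⟨x, by push_cast; ring⟩
    simp only [← Complex.exp_int_mul, ← mul_assoc]
    rw [integral_exp_mul_complex hx', hper, sub_self, zero_div]

section Fourier

variable {E : Type*} [NormedAddCommGroup E] [NormedSpace ℂ E]

/-- The symbol `z P + z⁻¹ Q` of the translation invariant operator `f ↦ P f(· + 1) + Q f(· - 1)`. -/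
def stepSymbol (P Q : E →L[ℂ] E) (z : ℂ) : E →L[ℂ] E := z • P + z⁻¹ • Q

theorem stepSymbol_neg (P Q : E →L[ℂ] E) (z : ℂ) : stepSymbol P Q (-z) = -stepSymbol P Q z := by
  simp only [stepSymbol, neg_smul, inv_neg, neg_add]

theorem differentiableAt_stepSymbol (P Q : E →L[ℂ] E) {z : ℂ} (hz : z ≠ 0) :
    DifferentiableAt ℂ (stepSymbol P Q) z := by
  unfold stepSymbol
  fun_prop (disch := exact hz)

theorem iterate_step_apply_eq_integral [CompleteSpace E] (P Q : E →L[ℂ] E) {ζ : ℂ} (hζ : ζ ≠ 0)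
    (v : E) (n : ℕ) (x : ℤ) :
    (fun (f : ℤ → E) x => P (f (x + 1)) + Q (f (x - 1)))^[n] (fun x => if x = 0 then v else 0) x =
      (2 * Real.pi : ℂ)⁻¹ • ∫ s : ℝ in -Real.pi..Real.pi, (ζ * Complex.exp (Complex.I * s)) ^ x •
        (stepSymbol P Q (ζ * Complex.exp (Complex.I * s)) ^ n) v := by
  let z : ℝ → ℂ := fun s => ζ * Complex.exp (Complex.I * s)
  have hz : ∀ s, z s ≠ 0 := fun s => mul_ne_zero hζ (Complex.exp_ne_zero _)
  have hzc : Continuous z := by fun_prop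
  induction n generalizing x with
  | zero =>
    have hpi : (2 * Real.pi : ℂ) ≠ 0 := by simp [Real.pi_ne_zero]
    simp only [mul_zpow, pow_zero, one_apply_eq_self, Function.iterate_zero, id_eq,
      intervalIntegral.integral_smul_const, intervalIntegral.integral_const_mul,
      integral_exp_I_mul_zpow, smul_smul]
    split_ifs with hx
    · rw [hx, zpow_zero, one_mul, inv_mul_cancel₀ hpi, one_smul]
    · rw [mul_zero, mul_zero, zero_smul]
  | succ n ih =>
    have hcont : ∀ y : ℤ, Continuous fun s => z s ^ y • (stepSymbol P Q (z s) ^ n) v := fun y => by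
      have hT : Continuous fun s => stepSymbol P Q (z s) := continuous_iff_continuousAt.2 fun s =>
        (differentiableAt_stepSymbol P Q (hz s)).continuousAt.comp hzc.continuousAt
      have hzy : Continuous fun s => z s ^ y := hzc.zpow₀ y fun s => Or.inl (hz s)
      exact hzy.smul ((hT.pow n).clm_apply continuous_const)
    have hint : ∀ (L : E →L[ℂ] E) (y : ℤ), IntervalIntegrable
        (fun s => L (z s ^ y • (stepSymbol P Q (z s) ^ n) v)) volume (-Real.pi) Real.pi :=
      fun L y => (L.continuous.comp (hcont y)).intervalIntegrable _ _
    rw [Function.iterate_succ_apply', ih, ih, map_smul, map_smul,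
      ← P.intervalIntegral_comp_comm ((hcont _).intervalIntegrable _ _),
      ← Q.intervalIntegral_comp_comm ((hcont _).intervalIntegrable _ _),
      ← smul_add, ← intervalIntegral.integral_add (hint P (x + 1)) (hint Q (x - 1))]
    congr 2 with s
    change P (z s ^ (x + 1) • (stepSymbol P Q (z s) ^ n) v)
      + Q (z s ^ (x - 1) • (stepSymbol P Q (z s) ^ n) v) = z s ^ x • _
    rw [map_smul, map_smul, zpow_add_one₀ (hz s), zpow_sub_one₀ (hz s), pow_succ']
    simp [stepSymbol, smul_smul, z]

end Fourier

end Walk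

section Spectrum

open ComplexConjugate

variable {a b : ℂ}

/-- The matrix `P` of the walk. -/
def walkP (a b : ℂ) : ℂ × ℂ →L[ℂ] ℂ × ℂ :=
  (a • ContinuousLinearMap.fst ℂ ℂ ℂ).prod (-conj b • ContinuousLinearMap.fst ℂ ℂ ℂ)

/-- The matrix `Q` of the walk. -/
def walkQ (a b : ℂ) : ℂ × ℂ →L[ℂ] ℂ × ℂ :=
  (b • ContinuousLinearMap.snd ℂ ℂ ℂ).prod (conj a • ContinuousLinearMap.snd ℂ ℂ ℂ)

/-- The unimodular number `i ā / |a|`, where the two group velocities of the walk are extremal. -/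
def wallPoint (a : ℂ) : ℂ := Complex.I * conj a / ‖a‖

/-- The symbol of the walk at the point `wallPoint a * e^{is}` of the unit circle. -/
def walkSymbol (a b s : ℂ) : ℂ × ℂ →L[ℂ] ℂ × ℂ :=
  stepSymbol (walkP a b) (walkQ a b) (wallPoint a * Complex.exp (Complex.I * s))

/-- The spectral projection of `walkSymbol a b s` for the eigenvalue `-i e^{-iν(s)}`. -/
def walkProj (a b s : ℂ) : ℂ × ℂ →L[ℂ] ℂ × ℂ :=
  (2 * cosNu ‖a‖ s)⁻¹ • (Complex.I • walkSymbol a b s + phaseFactor ‖a‖ (s + Real.pi) • 1)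

theorem qwStep_eq (a b : ℂ) :
    qwStep a b = fun f x => walkP a b (f (x + 1)) + walkQ a b (f (x - 1)) := rfl

theorem inv_wallPoint (ha : a ≠ 0) : (wallPoint a)⁻¹ = -(Complex.I * a / ‖a‖) := by
  refine inv_eq_of_mul_eq_one_right ?_
  have hA : (‖a‖ : ℂ) ≠ 0 := by simpa using ha
  rw [wallPoint]
  field_simp
  linear_combination Complex.conj_mul' a - conj a * a * Complex.I_sq

theorem norm_wallPoint (ha : a ≠ 0) : ‖wallPoint a‖ = 1 := by
  simp [wallPoint, ha]

theorem wallPoint_ne_zero (ha : a ≠ 0) : wallPoint a ≠ 0 :=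
  norm_ne_zero_iff.1 (norm_wallPoint ha ▸ one_ne_zero)

theorem stepSymbol_walk_apply (a b z : ℂ) (u : ℂ × ℂ) :
    stepSymbol (walkP a b) (walkQ a b) z u =
      (z * a * u.1 + z⁻¹ * b * u.2, -z * conj b * u.1 + z⁻¹ * conj a * u.2) := by
  ext <;> simp [stepSymbol, walkP, walkQ, mul_assoc]

theorem stepSymbol_walk_sq (hab : ‖a‖ ^ 2 + ‖b‖ ^ 2 = 1) {z : ℂ} (hz : z ≠ 0) :
    stepSymbol (walkP a b) (walkQ a b) z ^ 2 =
      (z * a + z⁻¹ * conj a) • stepSymbol (walkP a b) (walkQ a b) z - 1 := by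
  have hdet : a * conj a + b * conj b = 1 := by
    rw [Complex.mul_conj', Complex.mul_conj']
    exact_mod_cast hab
  have hzz : z * z⁻¹ = 1 := mul_inv_cancel₀ hz
  refine ContinuousLinearMap.ext fun u => Prod.ext ?_ ?_ <;>
    simp only [sq, mul_apply_eq_comp, stepSymbol_walk_apply, sub_apply, smul_apply,
      one_apply_eq_self, Prod.fst_sub, Prod.snd_sub, Prod.smul_fst, Prod.smul_snd, smul_eq_mul]
  · linear_combination -u.1 * (z * z⁻¹ * hdet + hzz)
  · linear_combination -u.2 * (z * z⁻¹ * hdet + hzz)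

theorem walkSymbol_sq (hab : ‖a‖ ^ 2 + ‖b‖ ^ 2 = 1) (ha : a ≠ 0) (s : ℂ) :
    walkSymbol a b s ^ 2 = (-2 * (‖a‖ * Complex.sin s)) • walkSymbol a b s - 1 := by
  have hA : (‖a‖ : ℂ) ≠ 0 := by simpa using ha
  have hz := mul_ne_zero (wallPoint_ne_zero ha) (Complex.exp_ne_zero (Complex.I * s))
  rw [walkSymbol, stepSymbol_walk_sq hab hz, mul_inv, inv_wallPoint ha, wallPoint,
    ← Complex.exp_neg, Complex.sin]
  congr 2
  field_simp
  linear_combination (Complex.exp (Complex.I * s) - Complex.exp (-(Complex.I * s))) *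
    Complex.conj_mul' a

theorem walkSymbol_add_pi (a b s : ℂ) : walkSymbol a b (s + Real.pi) = -walkSymbol a b s := by
  rw [walkSymbol, walkSymbol, ← stepSymbol_neg, mul_add, Complex.exp_add,
    mul_comm Complex.I Real.pi, Complex.exp_pi_mul_I, mul_neg_one, mul_neg]

theorem walkProj_add_pi_add_pi (a b s : ℂ) :
    walkProj a b (s + Real.pi + Real.pi) = walkProj a b s := by
  simp only [walkProj, walkSymbol_add_pi, cosNu_add_pi, phaseFactor_add_pi_add_pi, neg_neg]

theorem walkSymbol_pow (hab : ‖a‖ ^ 2 + ‖b‖ ^ 2 = 1) (ha : a ≠ 0) {s : ℂ} (hs : s ∈ cosNuDomain ‖a‖)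
    (n : ℕ) : walkSymbol a b s ^ n = (-Complex.I) ^ n • (phaseFactor ‖a‖ s ^ n • walkProj a b s +
      (-1 : ℂ) ^ n • phaseFactor ‖a‖ (s + Real.pi) ^ n • walkProj a b (s + Real.pi)) := by
  set l := -Complex.I * phaseFactor ‖a‖ s
  set r := Complex.I * phaseFactor ‖a‖ (s + Real.pi)
  have hdiff : l - r = -Complex.I * (2 * cosNu ‖a‖ s) := by
    rw [← phaseFactor_add_phaseFactor_add_pi]
    ring
  have hlr : l ≠ r := sub_ne_zero.1 (by simp [hdiff, cosNu_ne_zero hs])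
  have hsq : walkSymbol a b s ^ 2 = (l + r) • walkSymbol a b s - (l * r) • 1 := by
    have hadd : l + r = -2 * (‖a‖ * Complex.sin s) := by
      simp only [l, r, phaseFactor, cosNu_add_pi, Complex.sin_add_pi]
      linear_combination (2 * (‖a‖ * Complex.sin s)) * Complex.I_sq
    have hmul : l * r = 1 := by
      linear_combination (-Complex.I ^ 2) * phaseFactor_mul_phaseFactor_add_pi ‖a‖ s - Complex.I_sq
    rw [walkSymbol_sq hab ha, hadd, hmul, one_smul]
  have hinv : (l - r)⁻¹ = Complex.I * (2 * cosNu ‖a‖ s)⁻¹ := by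
    rw [hdiff, mul_inv, inv_neg, Complex.inv_I, neg_neg]
  have hl : (l - r)⁻¹ • (walkSymbol a b s - r • 1) = walkProj a b s := by
    rw [hinv, walkProj]
    linear_combination (norm := module)
      (-(2 * cosNu ‖a‖ s)⁻¹ * phaseFactor ‖a‖ (s + Real.pi) * Complex.I_sq) •
        (1 : ℂ × ℂ →L[ℂ] ℂ × ℂ)
  have hr : (r - l)⁻¹ • (walkSymbol a b s - l • 1) = walkProj a b (s + Real.pi) := by
    rw [← neg_sub l r, inv_neg, hinv, walkProj, walkSymbol_add_pi, phaseFactor_add_pi_add_pi,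
      cosNu_add_pi]
    linear_combination (norm := module)
      (-(2 * cosNu ‖a‖ s)⁻¹ * phaseFactor ‖a‖ s * Complex.I_sq) • (1 : ℂ × ℂ →L[ℂ] ℂ × ℂ)
  have hrpow : r ^ n = (-Complex.I) ^ n * ((-1) ^ n * phaseFactor ‖a‖ (s + Real.pi) ^ n) := by
    rw [← mul_pow, ← mul_pow]
    congr 1
    ring
  rw [pow_eq_of_sq_eq hlr hsq, hl, hr, hrpow, mul_pow, smul_add, smul_smul, smul_smul, smul_smul,
    ← mul_assoc]

theorem differentiableOn_walkProj (ha : a ≠ 0) (b : ℂ) :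
    DifferentiableOn ℂ (walkProj a b) (cosNuDomain ‖a‖) := by
  intro s hs
  have hz := mul_ne_zero (wallPoint_ne_zero ha) (Complex.exp_ne_zero (Complex.I * s))
  have hsymb : DifferentiableAt ℂ (walkSymbol a b) s :=
    (differentiableAt_stepSymbol _ _ hz).comp s (by fun_prop)
  have hnu := (hasDerivAt_cosNu hs).differentiableAt
  have hphase : DifferentiableAt ℂ (fun s => phaseFactor ‖a‖ (s + Real.pi)) s := by
    simp only [phaseFactor, cosNu_add_pi]
    fun_prop
  have hinv : DifferentiableAt ℂ (fun s => (2 * cosNu ‖a‖ s)⁻¹) s :=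
    (hnu.const_mul 2).inv (mul_ne_zero two_ne_zero (cosNu_ne_zero hs))
  have h : DifferentiableAt ℂ (walkProj a b) s := by
    unfold walkProj
    fun_prop
  exact h.differentiableWithinAt

theorem walkProj_zero_apply (ha : a ≠ 0) (b : ℂ) (φ : ℂ × ℂ) :
    walkProj a b 0 φ = (((1 - ‖a‖) * φ.1 + a * b / ‖a‖ * φ.2) / 2,
      (conj (a * b) / ‖a‖ * φ.1 + (1 + ‖a‖) * φ.2) / 2) := by
  have hA : (‖a‖ : ℂ) ≠ 0 := by simpa using ha
  have hf : phaseFactor ‖a‖ (0 + Real.pi) = 1 := by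
    rw [phaseFactor, cosNu_add_pi, cosNu_zero, Complex.sin_add_pi, Complex.sin_zero]
    ring
  rw [walkProj, walkSymbol, hf, cosNu_zero, mul_zero, Complex.exp_zero, mul_one, mul_one, one_smul,
    smul_apply, add_apply, smul_apply, one_apply_eq_self, stepSymbol_walk_apply, inv_wallPoint ha,
    wallPoint]
  refine Prod.ext ?_ ?_ <;>
    simp only [map_mul, Prod.fst_add, Prod.snd_add, Prod.smul_fst, Prod.smul_snd, smul_eq_mul] <;>
    field_simp
  · linear_combination a * (conj a * φ.1 - b * φ.2) * Complex.I_sq - φ.1 * Complex.conj_mul' a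
  · linear_combination (-conj a * (conj b * φ.1 + a * φ.2)) * Complex.I_sq
      + φ.2 * Complex.conj_mul' a

theorem nsq_walkProj_zero_apply (hab : ‖a‖ ^ 2 + ‖b‖ ^ 2 = 1) (ha : a ≠ 0) (φ : ℂ × ℂ) :
    nsq (walkProj a b 0 φ) = (nsq φ + ‖a‖ * lamA a b φ) / 2 := by
  have hA : ‖a‖ ≠ 0 := norm_ne_zero_iff.2 ha
  have hw : ‖a * b‖ ^ 2 = ‖a‖ ^ 2 * (1 - ‖a‖ ^ 2) := by rw [norm_mul, mul_pow, ← hab]; ring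
  rw [walkProj_zero_apply ha, lamA, ← map_mul]
  generalize a * b = w at *
  generalize ‖a‖ = A at *
  obtain ⟨p, q⟩ := φ
  simp only [nsq, ← Complex.normSq_eq_norm_sq, Complex.normSq_apply] at *
  simp only [Complex.add_re, Complex.add_im, Complex.mul_re, Complex.mul_im, Complex.conj_re,
    Complex.conj_im, Complex.div_ofReal_re, Complex.div_ofReal_im, Complex.sub_re, Complex.sub_im,
    Complex.ofReal_re, Complex.ofReal_im, Complex.one_re, Complex.one_im, Complex.div_ofNat_re,
    Complex.div_ofNat_im]
  field_simp
  linear_combination (p.re ^ 2 + p.im ^ 2 + q.re ^ 2 + q.im ^ 2) * hw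

end Spectrum

section Amplitude

variable {E : Type*} [NormedAddCommGroup E] [NormedSpace ℂ E]

theorem oscIntegrand_wallPhase (A : ℝ) (g : ℂ → E) (n : ℕ) (x : ℝ) (s : ℂ) :
    oscIntegrand (wallPhase A) g n (x - n * A) s =
      (Complex.exp (Complex.I * (x * s)) * phaseFactor A s ^ n) • g s := by
  rw [oscIntegrand, wallPhase, mul_pow, ← Complex.exp_nat_mul, ← mul_assoc, ← Complex.exp_add]
  congr 4
  push_cast
  ring

theorem exp_I_mul_intCast_mul_add_pi (x : ℤ) (s : ℂ) :
    Complex.exp (Complex.I * ((x : ℝ) * (s + Real.pi))) =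
      (-1) ^ x * Complex.exp (Complex.I * ((x : ℝ) * s)) := by
  rw [← Complex.exp_pi_mul_I, ← Complex.exp_int_mul, ← Complex.exp_add]
  congr 1
  push_cast
  ring

theorem oscIntegrand_wallPhase_add_pi (A : ℝ) (g : ℂ → E) (n : ℕ) (x : ℤ) (s : ℂ) :
    oscIntegrand (wallPhase A) g n (x - n * A) (s + Real.pi) = ((-1) ^ x *
      (Complex.exp (Complex.I * ((x : ℝ) * s)) * phaseFactor A (s + Real.pi) ^ n)) •
        g (s + Real.pi) := by
  rw [oscIntegrand_wallPhase, exp_I_mul_intCast_mul_add_pi, mul_assoc]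

theorem oscIntegrand_wallPhase_add_pi_add_pi (A : ℝ) {g : ℂ → E}
    (hg : ∀ s, g (s + Real.pi + Real.pi) = g s) (n : ℕ) (x : ℤ) (s : ℂ) :
    oscIntegrand (wallPhase A) g n (x - n * A) (s + Real.pi + Real.pi) =
      oscIntegrand (wallPhase A) g n (x - n * A) s := by
  rw [oscIntegrand_wallPhase_add_pi, exp_I_mul_intCast_mul_add_pi, phaseFactor_add_pi_add_pi, hg,
    oscIntegrand_wallPhase, ← mul_assoc, ← mul_assoc, ← mul_zpow, neg_one_mul, neg_neg, one_zpow,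
    one_mul]

theorem continuous_oscIntegrand_wallPhase {A : ℝ} (hA : |A| < 1) {g : ℂ → E}
    (hg : DifferentiableOn ℂ g (cosNuDomain A)) (n : ℕ) (d : ℝ) :
    Continuous fun x : ℝ => oscIntegrand (wallPhase A) g n d x := by
  obtain ⟨δ, hδ, hdom⟩ := exists_abs_im_le_imp_mem_cosNuDomain hA
  refine (differentiableOn_oscIntegrand (fun s hs =>
    (hasDerivAt_wallPhase hs).differentiableAt.differentiableWithinAt) hg n d).continuousOn
    |>.comp_continuous Complex.continuous_ofReal fun x => hdom _ ?_
  simpa using hδ.le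

theorem integral_add_pi_eq_of_add_pi_add_pi {h : ℝ → E}
    (hper : ∀ s, h (s + Real.pi + Real.pi) = h s) :
    ∫ s in -Real.pi..Real.pi, h (s + Real.pi) = ∫ s in -Real.pi..Real.pi, h s := by
  have hp : Function.Periodic h (2 * Real.pi) := fun s => by rw [two_mul, ← add_assoc, hper]
  have := hp.intervalIntegral_add_eq 0 (-Real.pi)
  rw [intervalIntegral.integral_comp_add_right]
  convert this using 2 <;> ring

end Amplitude

section WalkAmplitude

variable {a b : ℂ}

theorem zpow_smul_walkSymbol_pow_apply (hab : ‖a‖ ^ 2 + ‖b‖ ^ 2 = 1) (ha : a ≠ 0) {s : ℂ}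
    (hs : s ∈ cosNuDomain ‖a‖) (φ : ℂ × ℂ) (n : ℕ) (x : ℤ) :
    (wallPoint a * Complex.exp (Complex.I * s)) ^ x • (walkSymbol a b s ^ n) φ =
      (wallPoint a ^ x * (-Complex.I) ^ n) •
        (oscIntegrand (wallPhase ‖a‖) (fun s => walkProj a b s φ) n (x - n * ‖a‖) s +
          (-1 : ℂ) ^ (n + x : ℤ) • oscIntegrand (wallPhase ‖a‖) (fun s => walkProj a b s φ) n
            (x - n * ‖a‖) (s + Real.pi)) := by
  have hsign : (-1 : ℂ) ^ (n + x : ℤ) * (-1) ^ x = (-1) ^ n := by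
    rw [zpow_add₀ (by norm_num), mul_assoc, ← mul_zpow, neg_one_mul, neg_neg, one_zpow, mul_one,
      zpow_natCast]
  have hexp : Complex.exp (Complex.I * s) ^ x = Complex.exp (Complex.I * ((x : ℝ) * s)) := by
    rw [← Complex.exp_int_mul]
    congr 1
    push_cast
    ring
  rw [oscIntegrand_wallPhase_add_pi, oscIntegrand_wallPhase, walkSymbol_pow hab ha hs, mul_zpow,
    hexp, smul_smul ((-1 : ℂ) ^ (n + x : ℤ)), ← mul_assoc ((-1 : ℂ) ^ (n + x : ℤ)), hsign]
  simp only [smul_apply, add_apply]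
  module

theorem iterate_qwStep_eq_integral_oscIntegrand (hab : ‖a‖ ^ 2 + ‖b‖ ^ 2 = 1) (ha : a ≠ 0)
    (ha' : ‖a‖ < 1) (φ : ℂ × ℂ) (n : ℕ) (x : ℤ) :
    (qwStep a b)^[n] (qwDelta φ) x =
      ((2 * Real.pi)⁻¹ * (wallPoint a ^ x * (-Complex.I) ^ n) * (1 + (-1) ^ (n + x : ℤ))) •
        ∫ s : ℝ in -Real.pi..Real.pi,
          oscIntegrand (wallPhase ‖a‖) (fun s => walkProj a b s φ) n (x - n * ‖a‖) s := by
  have hA : |‖a‖| < 1 := by rwa [abs_norm]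
  let h : ℝ → ℂ × ℂ := fun s =>
    oscIntegrand (wallPhase ‖a‖) (fun s => walkProj a b s φ) n (x - n * ‖a‖) s
  have hper : ∀ s, h (s + Real.pi + Real.pi) = h s := fun s => by
    simp only [h, Complex.ofReal_add]
    exact oscIntegrand_wallPhase_add_pi_add_pi ‖a‖
      (fun s => by rw [walkProj_add_pi_add_pi]) n x s
  have hcont : Continuous h := continuous_oscIntegrand_wallPhase hA
    ((differentiableOn_walkProj ha b).clm_apply (differentiableOn_const φ)) n _
  obtain ⟨δ, hδ, hdom⟩ := exists_abs_im_le_imp_mem_cosNuDomain hA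
  have hsplit : ∀ s : ℝ, (wallPoint a * Complex.exp (Complex.I * s)) ^ x •
      (walkSymbol a b s ^ n) φ = (wallPoint a ^ x * (-Complex.I) ^ n) •
        (h s + (-1 : ℂ) ^ (n + x : ℤ) • h (s + Real.pi)) := fun s => by
    rw [zpow_smul_walkSymbol_pow_apply hab ha (hdom s (by simpa using hδ.le))]
    simp only [h, Complex.ofReal_add]
  simp only [walkSymbol] at hsplit
  unfold qwDelta
  rw [qwStep_eq, iterate_step_apply_eq_integral _ _ (wallPoint_ne_zero ha)]
  simp only [hsplit]
  rw [intervalIntegral.integral_smul, intervalIntegral.integral_add, intervalIntegral.integral_smul,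
    integral_add_pi_eq_of_add_pi_add_pi hper]
  · module
  · exact hcont.intervalIntegrable _ _
  · exact Continuous.intervalIntegrable (by fun_prop) _ _

end WalkAmplitude

section Wall

open ComplexConjugate

theorem nsq_smul (c : ℂ) (u : ℂ × ℂ) : nsq (c • u) = ‖c‖ ^ 2 * nsq u := by
  simp only [nsq, Prod.smul_fst, Prod.smul_snd, norm_smul]
  ring

theorem nsq_swap (u : ℂ × ℂ) : nsq u.swap = nsq u := add_comm _ _

theorem abs_norm_sq_sub_norm_sq_le {E : Type*} [SeminormedAddCommGroup E] (u v : E) :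
    |‖u‖ ^ 2 - ‖v‖ ^ 2| ≤ ‖u - v‖ * (‖u‖ + ‖v‖) := by
  rw [sq_sub_sq, abs_mul, abs_of_nonneg (by positivity : 0 ≤ ‖u‖ + ‖v‖), mul_comm]
  gcongr
  exact abs_norm_sub_norm_le u v

theorem abs_nsq_sub_nsq_le (u v : ℂ × ℂ) :
    |nsq u - nsq v| ≤ 2 * (‖u - v‖ * (‖u‖ + ‖v‖)) := by
  have hfst : |‖u.1‖ ^ 2 - ‖v.1‖ ^ 2| ≤ ‖u - v‖ * (‖u‖ + ‖v‖) :=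
    (abs_norm_sq_sub_norm_sq_le u.1 v.1).trans <| by
      gcongr
      exacts [norm_fst_le (u - v), norm_fst_le u, norm_fst_le v]
  have hsnd : |‖u.2‖ ^ 2 - ‖v.2‖ ^ 2| ≤ ‖u - v‖ * (‖u‖ + ‖v‖) :=
    (abs_norm_sq_sub_norm_sq_le u.2 v.2).trans <| by
      gcongr
      exacts [norm_snd_le (u - v), norm_snd_le u, norm_snd_le v]
  rw [nsq, nsq, add_sub_add_comm, two_mul]
  exact (abs_add_le _ _).trans (add_le_add hfst hsnd)

theorem one_add_neg_one_zpow_sq (m : ℤ) :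
    (1 + (-1 : ℝ) ^ m) ^ 2 = 2 * (1 + (-1 : ℝ) ^ m) := by
  have h : (-1 : ℝ) ^ m * (-1) ^ m = 1 := by rw [← mul_zpow, neg_one_mul, neg_neg, one_zpow]
  linear_combination h

theorem one_add_neg_one_zpow_sq_le (m : ℤ) : (1 + (-1 : ℝ) ^ m) ^ 2 ≤ 4 := by
  nlinarith [one_add_neg_one_zpow_sq m, sq_nonneg (1 + (-1 : ℝ) ^ m)]

variable {a b : ℂ}

theorem qwP_eq_nsq_integral_oscIntegrand (hab : ‖a‖ ^ 2 + ‖b‖ ^ 2 = 1) (ha : a ≠ 0)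
    (ha' : ‖a‖ < 1) (φ : ℂ × ℂ) (n : ℕ) (x : ℤ) :
    qwP a b φ n x = (1 + (-1 : ℝ) ^ (n + x : ℤ)) ^ 2 / (2 * Real.pi) ^ 2 *
      nsq (∫ s : ℝ in -Real.pi..Real.pi,
        oscIntegrand (wallPhase ‖a‖) (fun s => walkProj a b s φ) n (x - n * ‖a‖) s) := by
  have hcast : (1 + (-1 : ℂ) ^ (n + x : ℤ)) = ((1 + (-1 : ℝ) ^ (n + x : ℤ) : ℝ) : ℂ) := by
    push_cast
    rfl
  rw [qwP, iterate_qwStep_eq_integral_oscIntegrand hab ha ha', nsq_smul, hcast]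
  simp only [norm_mul, norm_inv, norm_zpow, norm_pow, norm_neg, Complex.norm_I,
    norm_wallPoint ha, Complex.norm_real, one_zpow, one_pow, mul_one,
    mul_pow, inv_pow, Real.norm_eq_abs, sq_abs]
  ring

theorem nsq_two_pi_mul_smul_walkProj_zero (hab : ‖a‖ ^ 2 + ‖b‖ ^ 2 = 1) (ha : a ≠ 0)
    (φ : ℂ × ℂ) (κ : ℝ) (w : ℂ) : nsq ((2 * Real.pi * κ * w) • walkProj a b 0 φ) =
      (2 * Real.pi) ^ 2 * (κ ^ 2 * ‖w‖ ^ 2 * (nsq φ + ‖a‖ * lamA a b φ) / 2) := by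
  simp only [nsq_smul, nsq_walkProj_zero_apply hab ha, norm_mul, mul_pow, Complex.norm_real,
    Real.norm_eq_abs, sq_abs, Complex.norm_ofNat]
  ring

theorem norm_two_pi_mul_Ai_smul_le {E : Type*} [NormedAddCommGroup E] [NormedSpace ℂ E]
    {κ x D : ℝ} (hκ : 0 ≤ κ) (hx : |x| ≤ D) (u : E) :
    ‖(2 * Real.pi * κ * Ai x) • u‖ ≤ 2 * Real.pi * Real.exp (1 / 3 + D) * ‖u‖ * κ := by
  have hAi : ‖Ai x‖ ≤ Real.exp (1 / 3 + D) :=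
    (norm_Ai_le x).trans (Real.exp_le_exp.2 (by linarith [(abs_le.1 hx).1]))
  calc ‖(2 * Real.pi * κ * Ai x) • u‖ = 2 * Real.pi * κ * ‖Ai x‖ * ‖u‖ := by
        rw [norm_smul, norm_mul, norm_mul, norm_mul, Complex.norm_ofNat,
          Complex.norm_of_nonneg Real.pi_pos.le, Complex.norm_of_nonneg hκ]
    _ ≤ 2 * Real.pi * κ * Real.exp (1 / 3 + D) * ‖u‖ := by gcongr
    _ = _ := by ring

theorem abs_nsq_sub_nsq_le_mul_pow_three {u v : ℂ × ℂ} {K L κ : ℝ} (hκ₀ : 0 ≤ κ) (hκ₁ : κ ≤ 1)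
    (hK : 0 ≤ K) (huv : ‖u - v‖ ≤ K * κ ^ 2) (hv : ‖v‖ ≤ L * κ) :
    |nsq u - nsq v| ≤ 2 * (K * (K + 2 * L)) * κ ^ 3 := by
  have hsum : ‖u‖ + ‖v‖ ≤ (K + 2 * L) * κ := by
    calc ‖u‖ + ‖v‖ ≤ ‖u - v‖ + 2 * ‖v‖ := by linarith [norm_le_norm_sub_add u v]
      _ ≤ K * κ ^ 2 + 2 * (L * κ) := by gcongr
      _ ≤ K * κ + 2 * (L * κ) := by gcongr; exact pow_le_of_le_one hκ₀ hκ₁ two_ne_zero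
      _ = (K + 2 * L) * κ := by ring
  calc |nsq u - nsq v| ≤ 2 * (‖u - v‖ * (‖u‖ + ‖v‖)) := abs_nsq_sub_nsq_le u v
    _ ≤ 2 * (K * κ ^ 2 * ((K + 2 * L) * κ)) := by gcongr
    _ = _ := by ring

/-- The difference between the transition probability and its Airy approximation at the wall
`nε|a|`, where `κ` is the scale of the Airy function. -/
def airyError (a b : ℂ) (φ : ℂ × ℂ) (ε κ : ℝ) (n : ℕ) (y : ℤ) : ℝ :=
  qwP a b φ n y - (1 + (-1) ^ ((n : ℤ) + y)) * κ ^ 2 * ‖Ai (κ * (ε * y - n * ‖a‖))‖ ^ 2 *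
    (nsq φ + ε * ‖a‖ * lamA a b φ)

theorem airyError_one_eq (hab : ‖a‖ ^ 2 + ‖b‖ ^ 2 = 1) (ha : a ≠ 0) (ha' : ‖a‖ < 1)
    (φ : ℂ × ℂ) (κ : ℝ) (n : ℕ) (y : ℤ) :
    airyError a b φ 1 κ n y = (1 + (-1 : ℝ) ^ (n + y : ℤ)) ^ 2 / (2 * Real.pi) ^ 2 *
      (nsq (∫ s : ℝ in -Real.pi..Real.pi,
          oscIntegrand (wallPhase ‖a‖) (fun s => walkProj a b s φ) n (y - n * ‖a‖) s) -
        nsq ((2 * Real.pi * κ * Ai (κ * (y - n * ‖a‖))) • walkProj a b 0 φ)) := by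
  rw [airyError, qwP_eq_nsq_integral_oscIntegrand hab ha ha',
    nsq_two_pi_mul_smul_walkProj_zero hab ha, mul_sub, one_mul, one_mul, one_add_neg_one_zpow_sq]
  field_simp

theorem exists_abs_airyError_one_le (hab : ‖a‖ ^ 2 + ‖b‖ ^ 2 = 1) (ha : a ≠ 0) (hb : b ≠ 0)
    (φ : ℂ × ℂ) (D : ℝ) : ∃ K, ∀ᶠ n : ℕ in atTop, ∀ y : ℤ,
      |airyScale (‖a‖ * ‖b‖ ^ 2 / 6) n * (y - n * ‖a‖)| ≤ D →
      |airyError a b φ 1 (airyScale (‖a‖ * ‖b‖ ^ 2 / 6) n) n y| ≤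
        K * airyScale (‖a‖ * ‖b‖ ^ 2 / 6) n ^ 3 := by
  have hA : ‖a‖ ∈ Set.Ioo 0 1 := by
    have := norm_pos_iff.2 hb
    exact ⟨norm_pos_iff.2 ha, by nlinarith [norm_nonneg a]⟩
  obtain ⟨δ, hδ, hG⟩ := exists_isAiryPhase_wallPhase hA
  rw [← eq_sub_iff_add_eq'.2 hab] at hG
  have hg : DifferentiableOn ℂ (fun s => walkProj a b s φ) (symmRect Real.pi δ) :=
    ((differentiableOn_walkProj ha b).mono hδ).clm_apply (differentiableOn_const φ)
  obtain ⟨K, hK, hint⟩ := hG.exists_norm_integral_oscIntegrand_sub_Ai_le hg D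
  let L := 2 * Real.pi * Real.exp (1 / 3 + D) * ‖walkProj a b 0 φ‖
  refine ⟨4 / (2 * Real.pi) ^ 2 * (2 * (K * (K + 2 * L))), ?_⟩
  filter_upwards [hint, (tendsto_airyScale hG.coeff_pos).eventually_le_const one_pos,
    eventually_gt_atTop 0] with n hint hκ₁ hn y hD
  specialize hint (y - n * ‖a‖) hD fun τ _ => by
    rw [← oscIntegrand_wallPhase_add_pi_add_pi ‖a‖ (fun s => by rw [walkProj_add_pi_add_pi])]
    congr 1
    ring
  have hκ₀ := (airyScale_pos hG.coeff_pos hn).le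
  have hnsq := abs_nsq_sub_nsq_le_mul_pow_three hκ₀ hκ₁ hK hint
    (norm_two_pi_mul_Ai_smul_le hκ₀ hD _)
  rw [airyError_one_eq hab ha hA.2, abs_mul, abs_of_nonneg (by positivity),
    mul_assoc (4 / (2 * Real.pi) ^ 2)]
  gcongr
  exact one_add_neg_one_zpow_sq_le _

theorem qwStep_reflect (a b : ℂ) (φ : ℂ × ℂ) (n : ℕ) (x : ℤ) :
    (qwStep (conj a) (-conj b))^[n] (qwDelta φ.swap) (-x) =
      ((qwStep a b)^[n] (qwDelta φ) x).swap := by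
  induction n generalizing x with
  | zero =>
    simp only [Function.iterate_zero, id_eq, qwDelta, neg_eq_zero]
    split_ifs <;> rfl
  | succ n ih =>
    rw [Function.iterate_succ_apply', Function.iterate_succ_apply', qwStep, qwStep, neg_add_eq_sub,
      ← neg_sub x 1, ← neg_add', ih, ih]
    ext <;> simp [add_comm]

theorem qwP_reflect (a b : ℂ) (φ : ℂ × ℂ) (n : ℕ) (x : ℤ) :
    qwP (conj a) (-conj b) φ.swap n (-x) = qwP a b φ n x := by
  rw [qwP, qwStep_reflect, nsq_swap, qwP]

theorem lamA_reflect (a b : ℂ) (φ : ℂ × ℂ) :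
    lamA (conj a) (-conj b) φ.swap = -lamA a b φ := by
  have e : conj a * -conj b * conj φ.2 * φ.1 + a * -b * φ.2 * conj φ.1 =
      -(a * b * conj φ.1 * φ.2 + conj a * conj b * φ.1 * conj φ.2) := by ring
  simp only [lamA, Prod.fst_swap, Prod.snd_swap, map_neg, Complex.conj_conj, RCLike.norm_conj, e,
    Complex.neg_re]
  ring

theorem airyError_reflect (a b : ℂ) (φ : ℂ × ℂ) (ε κ : ℝ) (n : ℕ) (y : ℤ) :
    airyError (conj a) (-conj b) φ.swap ε κ n (-y) = airyError a b φ (-ε) κ n y := by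
  have hsign : (-1 : ℝ) ^ ((n : ℤ) + -y) = (-1) ^ ((n : ℤ) + y) := by
    rw [zpow_add₀ (by norm_num), zpow_add₀ (by norm_num), zpow_neg, ← inv_zpow, inv_neg_one]
  simp only [airyError, qwP_reflect, lamA_reflect, nsq_swap, hsign, RCLike.norm_conj, Int.cast_neg,
    mul_neg, neg_mul]

theorem exists_abs_airyError_le (hab : ‖a‖ ^ 2 + ‖b‖ ^ 2 = 1) (ha : a ≠ 0) (hb : b ≠ 0)
    (φ : ℂ × ℂ) {ε : ℝ} (hε : ε = 1 ∨ ε = -1) (D : ℝ) : ∃ K, ∀ᶠ n : ℕ in atTop, ∀ y : ℤ,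
      |airyScale (‖a‖ * ‖b‖ ^ 2 / 6) n * (ε * y - n * ‖a‖)| ≤ D →
      |airyError a b φ ε (airyScale (‖a‖ * ‖b‖ ^ 2 / 6) n) n y| ≤
        K * airyScale (‖a‖ * ‖b‖ ^ 2 / 6) n ^ 3 := by
  rcases hε with rfl | rfl
  · simpa only [one_mul] using exists_abs_airyError_one_le hab ha hb φ D
  · obtain ⟨K, hK⟩ := exists_abs_airyError_one_le (a := conj a) (b := -conj b)
      (by simpa using hab) (by simpa using ha) (by simpa using hb) φ.swap D
    refine ⟨K, hK.mono fun n hn y hy => ?_⟩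
    simpa [airyError_reflect] using hn (-y) (by simpa using hy)

theorem airyScale_mul_natCast_rpow {c : ℝ} (hc : 0 < c) {n : ℕ} (hn : 0 < n) :
    airyScale c n * (n : ℝ) ^ (1 / 3 : ℝ) = (3 * c) ^ (-(1 / 3) : ℝ) := by
  have hn' : (0 : ℝ) < n := Nat.cast_pos.2 hn
  rw [airyScale, Real.mul_rpow (by positivity) hn'.le, mul_assoc, ← Real.rpow_add hn',
    neg_add_cancel, Real.rpow_zero, mul_one]

theorem airyError_isBigO (hab : ‖a‖ ^ 2 + ‖b‖ ^ 2 = 1) (ha : a ≠ 0) (hb : b ≠ 0) (φ : ℂ × ℂ)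
    {ε : ℝ} (hε : ε = 1 ∨ ε = -1) {y : ℕ → ℤ}
    (hy : (fun n : ℕ => ε * y n - n * ‖a‖) =O[atTop] fun n : ℕ => (n : ℝ) ^ (1 / 3 : ℝ)) :
    (fun n : ℕ => airyError a b φ ε (airyScale (‖a‖ * ‖b‖ ^ 2 / 6) n) n (y n)) =O[atTop]
      fun n : ℕ => 1 / (n : ℝ) := by
  have hc : 0 < ‖a‖ * ‖b‖ ^ 2 / 6 := by positivity
  set c := ‖a‖ * ‖b‖ ^ 2 / 6
  obtain ⟨C, hC⟩ := hy.bound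
  obtain ⟨K, hK⟩ := exists_abs_airyError_le hab ha hb φ hε (C * (3 * c) ^ (-(1 / 3) : ℝ))
  refine .of_bound (K / (3 * c)) ?_
  filter_upwards [hC, hK, eventually_gt_atTop 0] with n hdist hle hn
  have hn' : (0 : ℝ) < n := Nat.cast_pos.2 hn
  have hκ := airyScale_pos hc hn
  rw [Real.norm_of_nonneg (by positivity : (0 : ℝ) ≤ (n : ℝ) ^ (1 / 3 : ℝ))] at hdist
  have hD : |airyScale c n * (ε * y n - n * ‖a‖)| ≤ C * (3 * c) ^ (-(1 / 3) : ℝ) := by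
    calc |airyScale c n * (ε * y n - n * ‖a‖)| = airyScale c n * |ε * y n - n * ‖a‖| := by
          rw [abs_mul, abs_of_pos hκ]
      _ ≤ airyScale c n * (C * (n : ℝ) ^ (1 / 3 : ℝ)) := by gcongr; exact hdist
      _ = C * (3 * c) ^ (-(1 / 3) : ℝ) := by
          rw [mul_left_comm, airyScale_mul_natCast_rpow hc hn]
  calc ‖airyError a b φ ε (airyScale c n) n (y n)‖ ≤ K * airyScale c n ^ 3 := hle _ hD
    _ = K / (3 * c) * ‖1 / (n : ℝ)‖ := by
      have hκ₃ : airyScale c n ^ 3 = 1 / (3 * c) / n := by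
        rw [eq_div_iff hn'.ne', mul_comm, natCast_mul_airyScale_pow_three hc hn]
      rw [hκ₃, Real.norm_of_nonneg (by positivity)]
      ring

theorem airyScale_eq_mul_rpow {A B : ℝ} (hA : 0 ≤ A) (n : ℕ) :
    airyScale (A * B ^ 2 / 6) n =
      (2 / (A * B ^ 2)) ^ ((1 : ℝ) / 3) * (n : ℝ) ^ (-(1 : ℝ) / 3) := by
  rw [airyScale, neg_div, Real.rpow_neg (by positivity), Real.rpow_neg (by positivity),
    ← Real.inv_rpow (by positivity), ← Real.inv_rpow (by positivity),
    ← Real.mul_rpow (by positivity) (by positivity)]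
  congr 1
  field_simp
  norm_num

theorem stmt2_general (a b : ℂ) (hab1 : ‖a‖ ^ 2 + ‖b‖ ^ 2 = 1) (hab : a * b ≠ 0)
    (φ : ℂ × ℂ) (ε : ℝ) (hε : ε = 1 ∨ ε = -1)
    (y : ℕ → ℤ) (d : ℕ → ℝ)
    (hy : ∀ n : ℕ, (y n : ℝ) = ε * (n : ℝ) * ‖a‖ + d n)
    (hd : d =O[atTop] fun n : ℕ => (n : ℝ) ^ ((1 : ℝ) / 3)) :
    (fun n : ℕ => qwP a b φ n (y n) -
        (1 + (-1 : ℝ) ^ ((n : ℤ) + y n)) * ((2 / (‖a‖ * ‖b‖ ^ 2)) ^ ((1 : ℝ) / 3)) ^ 2 *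
          (n : ℝ) ^ (-(2 : ℝ) / 3) *
          ‖Ai (ε * (2 / (‖a‖ * ‖b‖ ^ 2)) ^ ((1 : ℝ) / 3) * (n : ℝ) ^ (-(1 : ℝ) / 3) * d n)‖ ^ 2 *
          (nsq φ + ε * ‖a‖ * lamA a b φ))
      =O[atTop] (fun n : ℕ => 1 / (n : ℝ)) := by
  have hε₂ : ε ^ 2 = 1 := by rcases hε with rfl | rfl <;> norm_num
  have hdist : ∀ n, ε * y n - n * ‖a‖ = ε * d n := fun n => by
    rw [hy]
    linear_combination n * ‖a‖ * hε₂
  have hmain := airyError_isBigO hab1 (left_ne_zero_of_mul hab) (right_ne_zero_of_mul hab) φ hε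
    (y := y) (by simpa only [hdist] using hd.const_mul_left ε)
  refine hmain.congr_left fun n => ?_
  have hpow : ((n : ℝ) ^ (-(1 : ℝ) / 3)) ^ 2 = (n : ℝ) ^ (-(2 : ℝ) / 3) := by
    rw [← Real.rpow_mul_natCast n.cast_nonneg]
    norm_num
  rw [airyError, hdist, airyScale_eq_mul_rpow (norm_nonneg a), mul_pow, hpow,
    show ∀ α ν : ℝ, α * ν * (ε * d n) = ε * α * ν * d n by intros; ring]
  ring

end Wall

/-- Theorem `wall`: Airy asymptotics of `p_n(φ; y_n)` around the wall
`y_n = ε n|a| + d_n`, `d_n = O(n^{1/3})`, `ε = ±1`: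
`p_n(φ;y_n) = (1+(−1)^{n+y_n}) α₀² n^{−2/3} |Ai(ε α₀ n^{−1/3} d_n)|² (1 + ε|a|λ_A(φ)) + O(1/n)`
with `α₀ = (2/(|a||b|²))^{1/3}`. -/
theorem stmt2 (a b : ℂ) (hab1 : ‖a‖ ^ 2 + ‖b‖ ^ 2 = 1) (hab : a * b ≠ 0)
    (φ : ℂ × ℂ) (hφ : nsq φ = 1) (ε : ℝ) (hε : ε = 1 ∨ ε = -1)
    (y : ℕ → ℤ) (d : ℕ → ℝ)
    (hy : ∀ n : ℕ, (y n : ℝ) = ε * (n : ℝ) * ‖a‖ + d n)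
    (hd : d =O[atTop] fun n : ℕ => (n : ℝ) ^ ((1 : ℝ) / 3)) :
    (fun n : ℕ => qwP a b φ n (y n) -
        (1 + (-1 : ℝ) ^ ((n : ℤ) + y n)) * ((2 / (‖a‖ * ‖b‖ ^ 2)) ^ ((1 : ℝ) / 3)) ^ 2 *
          (n : ℝ) ^ (-(2 : ℝ) / 3) *
          ‖Ai (ε * (2 / (‖a‖ * ‖b‖ ^ 2)) ^ ((1 : ℝ) / 3) * (n : ℝ) ^ (-(1 : ℝ) / 3) * d n)‖ ^ 2 *
          (1 + ε * ‖a‖ * lamA a b φ))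
      =O[atTop] (fun n : ℕ => 1 / (n : ℝ)) := by
  simpa only [hφ] using stmt2_general a b hab1 hab φ ε hε y d hy hd
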